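/- arXiv:1707.02916 — 3 statements merged into one kernel-verified Lean document; each statement's English description precedes it below -/
import Mathlib

section
/- Let H be a graph with m edges and tree-width t. Then for every η > 0 there exists ρ > 0 and n₀ such that for every d ∈ (0,1] and every (ρ,d)-dense graph G with at least n₀ vertices, t_H(G) ≥ d^{(t(t+1)/2 + 1)·m} − η. -/
open MeasureTheory

/-- The homomorphism density `t_H(G)`. -/
noncomputable def homDensity {α β : Type*} [Fintype α] [Fintype β]
    (H : SimpleGraph α) (G : SimpleGraph β) : ℝ :=
  (Nat.card (H →g G) : ℝ) / (Fintype.card β : ℝ) ^ (Fintype.card α)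

/-- The number of edges of a graph. -/
noncomputable def edgeCount {α : Type*} (H : SimpleGraph α) : ℕ :=
  Nat.card H.edgeSet

/-- `G` is `(ρ,d)`-dense: every vertex subset `X` with `|X| ≥ ρ|V(G)|`
spans at least `(d/2)|X|²` edges. -/
def LocallyDense {β : Type*} [Fintype β] (G : SimpleGraph β) (ρ d : ℝ) : Prop :=
  ∀ X : Finset β, ρ * (Fintype.card β : ℝ) ≤ (X.card : ℝ) →
    d / 2 * (X.card : ℝ) ^ 2 ≤
      (Nat.card {e : Sym2 β // e ∈ G.edgeSet ∧ ∀ v ∈ e, v ∈ X} : ℝ)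

/-- `(bag, T)` is a tree decomposition of `H`. -/
def IsTreeDecomp {α ι : Type*} [DecidableEq α] (H : SimpleGraph α) (bag : ι → Finset α)
    (T : SimpleGraph ι) : Prop :=
  T.IsTree ∧
  (∀ v : α, ∃ X, v ∈ bag X) ∧
  (∀ u v : α, H.Adj u v → ∃ X, u ∈ bag X ∧ v ∈ bag X) ∧
  (∀ X Y Z : ι, ∀ p : T.Walk X Y, p.IsPath → Z ∈ p.support →
    bag X ∩ bag Y ⊆ bag Z)

/-- The tree-width of `H`: the minimum width (`max |X| - 1`) over all tree
decompositions of `H`. -/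
noncomputable def treewidth {α : Type*} [Fintype α] [DecidableEq α]
    (H : SimpleGraph α) : ℕ :=
  sInf {w : ℕ | ∃ (ι : Type) (_ : Fintype ι) (bag : ι → Finset α) (T : SimpleGraph ι),
    IsTreeDecomp H bag T ∧ ∀ X : ι, (bag X).card ≤ w + 1}

/-!
Rooting a tree decomposition of width `t` and repeatedly eliminating a vertex whose topmost bag is
deepest reduces `H` to the edgeless graph, and every eliminated vertex has at most `t` neighbours at
that time. Each elimination lowers the rank (number of vertices minus number of components), so
there are at most `rank H ≤ e(H)` of them.

Now let `k = t + 1` and let `τ` be the density of `K_k` in `G`. The `k`-cliques of `G` can be pruned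
to a family in which every set in the shadow has at least a `δ = c_k τ` proportion of its
conceivable extensions. Undoing the eliminations one at a time, with the cliques of each
intermediate graph mapped into members of this family, costs a factor `δ` per step, whence
`(c_k τ) ^ rank H ≤ t_H(G)`. Applying this to tensor powers of `G` removes the constant `c_k`.

Local density bounds `τ` from below: induction on `k` inside neighbourhoods, with the power mean
inequality, gives `τ ≥ d ^ (k choose 2) - ρ`, where `k choose 2 = t (t + 1) / 2`.
-/

section Trees

variable {ι : Type*} {T : SimpleGraph ι}

/-- The vertex set `P` is closed under taking paths in `T`; in a tree these are the vertex sets of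
subtrees. -/
def PathConvex (T : SimpleGraph ι) (P : Set ι) : Prop :=
  ∀ ⦃X Y : ι⦄, X ∈ P → Y ∈ P → ∀ p : T.Walk X Y, p.IsPath → ∀ Z ∈ p.support, Z ∈ P

theorem PathConvex.isPath_append {P : Set ι} (hP : PathConvex T P) {r X Y : ι} (hX : X ∈ P)
    (hmin : ∀ Z ∈ P, T.dist r X ≤ T.dist r Z) (hY : Y ∈ P) {q : T.Walk r X} (hq : q.IsPath)
    (hlen : q.length = T.dist r X) {p : T.Walk X Y} (hp : p.IsPath) : (q.append p).IsPath := by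
  classical
  rw [SimpleGraph.Walk.isPath_def, SimpleGraph.Walk.support_append, List.nodup_append']
  refine ⟨hq.support_nodup, hp.support_nodup.tail, fun Z hZq hZp => ?_⟩
  have hZX : Z ≠ X := by
    rintro rfl
    have hnodup := hp.support_nodup
    rw [← SimpleGraph.Walk.cons_tail_support, List.nodup_cons] at hnodup
    exact hnodup.1 hZp
  have hdist : T.dist r X ≤ T.dist r Z := hmin Z (hP hX hY p hp Z (List.mem_of_mem_tail hZp))
  have hle : T.dist r Z ≤ (q.takeUntil Z hZq).length := SimpleGraph.dist_le _
  have hlt := SimpleGraph.Walk.length_takeUntil_lt_length hZq hZX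
  omega

-- Both `X` and `W` lie on the path from the root `r` to `Y`.
theorem PathConvex.mem_of_dist_le (hT : T.IsTree) {P Q : Set ι} (hP : PathConvex T P)
    (hQ : PathConvex T Q) {r X W Y : ι} (hX : X ∈ P) (hXmin : ∀ Z ∈ P, T.dist r X ≤ T.dist r Z)
    (hW : W ∈ Q) (hWmin : ∀ Z ∈ Q, T.dist r W ≤ T.dist r Z) (hWX : T.dist r W ≤ T.dist r X)
    (hYP : Y ∈ P) (hYQ : Y ∈ Q) : X ∈ Q := by
  classical
  obtain ⟨q₁, hq₁, hlen₁⟩ := hT.connected.exists_path_of_dist r X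
  obtain ⟨q₂, hq₂, hlen₂⟩ := hT.connected.exists_path_of_dist r W
  obtain ⟨p₁, hp₁, -⟩ := hT.connected.exists_path_of_dist X Y
  obtain ⟨p₂, hp₂, -⟩ := hT.connected.exists_path_of_dist W Y
  have heq : q₁.append p₁ = q₂.append p₂ :=
    (hT.existsUnique_path r Y).unique (hP.isPath_append hX hXmin hYP hq₁ hlen₁ hp₁)
      (hQ.isPath_append hW hWmin hYQ hq₂ hlen₂ hp₂)
  have hmem : X ∈ (q₂.append p₂).support := by
    rw [← heq, SimpleGraph.Walk.mem_support_append_iff]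
    exact Or.inl q₁.end_mem_support
  rcases (SimpleGraph.Walk.mem_support_append_iff _ _).1 hmem with h | h
  · by_cases hne : X = W
    · exact hne ▸ hW
    · have hle : T.dist r X ≤ (q₂.takeUntil X h).length := SimpleGraph.dist_le _
      have hlt := SimpleGraph.Walk.length_takeUntil_lt_length h hne
      omega
  · exact hQ hW hYQ p₂ hp₂ X h

end Trees

section Elimination

variable {α : Type*} {H : SimpleGraph α} {u v : α}

/-- Vertex elimination: the neighbourhood of `v` is made a clique and `v` becomes isolated. The
vertex type is kept, so that all graphs of an elimination order live on `α`. -/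
def eliminate (H : SimpleGraph α) (v : α) : SimpleGraph α where
  Adj x y := x ≠ y ∧ x ≠ v ∧ y ≠ v ∧ (H.Adj x y ∨ (H.Adj v x ∧ H.Adj v y))
  symm := ⟨fun _ _ h => ⟨h.1.symm, h.2.2.1, h.2.1, h.2.2.2.imp (·.symm) (·.symm)⟩⟩
  loopless := ⟨fun _ h => h.1 rfl⟩

/-- `H` can be made edgeless by successively eliminating non-isolated vertices which have fewer than
`k` neighbours when they are eliminated. -/
inductive HasElimOrder (k : ℕ) : SimpleGraph α → Prop
  | bot : HasElimOrder k ⊥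
  | of_eliminate {H : SimpleGraph α} {v : α} (hne : (H.neighborSet v).Nonempty)
      (hlt : (H.neighborSet v).ncard < k) (h : HasElimOrder k (eliminate H v)) : HasElimOrder k H

theorem reachable_of_eliminate_adj {x y : α} (h : (eliminate H v).Adj x y) : H.Reachable x y := by
  obtain ⟨-, -, -, hxy | ⟨hx, hy⟩⟩ := h
  · exact hxy.reachable
  · exact hx.symm.reachable.trans hy.reachable

theorem not_reachable_eliminate (huv : u ≠ v) : ¬ (eliminate H v).Reachable v u := by
  rintro ⟨_ | ⟨h, _⟩⟩
  · exact huv rfl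
  · exact h.2.1 rfl

theorem card_connectedComponent_lt_eliminate [Finite α] (h : H.Adj v u) :
    Nat.card H.ConnectedComponent < Nat.card (eliminate H v).ConnectedComponent := by
  have : Fintype H.ConnectedComponent := Fintype.ofFinite _
  have : Fintype (eliminate H v).ConnectedComponent := Fintype.ofFinite _
  have hwalk : ∀ x y (_ : (eliminate H v).Walk x y), H.Reachable x y := by
    intro x y p
    induction p with
    | nil => exact .refl _
    | cons hxy _ ih => exact (reachable_of_eliminate_adj hxy).trans ih
  let f : (eliminate H v).ConnectedComponent → H.ConnectedComponent :=
    SimpleGraph.ConnectedComponent.lift H.connectedComponentMk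
      fun x y p _ => SimpleGraph.ConnectedComponent.eq.2 (hwalk x y p)
  rw [Nat.card_eq_fintype_card, Nat.card_eq_fintype_card]
  refine Fintype.card_lt_of_surjective_not_injective f (fun C => ?_) fun hf => ?_
  · obtain ⟨x, rfl⟩ := C.exists_rep
    exact ⟨(eliminate H v).connectedComponentMk x, rfl⟩
  · have huv : f ((eliminate H v).connectedComponentMk v) =
        f ((eliminate H v).connectedComponentMk u) :=
      SimpleGraph.ConnectedComponent.eq.2 h.reachable
    exact not_reachable_eliminate h.ne' (SimpleGraph.ConnectedComponent.eq.1 (hf huv))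

theorem card_le_card_connectedComponent_add_edgeCount [Finite α] (H : SimpleGraph α) :
    Nat.card α ≤ Nat.card H.ConnectedComponent + edgeCount H := by
  have : Fintype H.ConnectedComponent := Fintype.ofFinite _
  have hvertices : Nat.card α = ∑ C : H.ConnectedComponent, Nat.card C := by
    rw [← Nat.card_sigma]
    exact Nat.card_congr (Equiv.sigmaFiberEquiv H.connectedComponentMk).symm
  have hedges : ∑ C : H.ConnectedComponent, Nat.card C.toSimpleGraph.edgeSet ≤ edgeCount H := by
    rw [← Nat.card_sigma]
    refine Nat.card_le_card_of_injective (fun e => e.1.toSimpleGraph_hom.mapEdgeSet e.2) ?_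
    rintro ⟨C, ⟨e, he⟩⟩ ⟨D, ⟨f, hf⟩⟩ hef
    have hval : e.map Subtype.val = f.map Subtype.val := congrArg Subtype.val hef
    have hmem : (e.out.1 : α) ∈ f.map Subtype.val :=
      hval ▸ Sym2.mem_map.2 ⟨e.out.1, e.out_fst_mem, rfl⟩
    obtain ⟨y, -, hy⟩ := Sym2.mem_map.1 hmem
    obtain rfl : C = D := e.out.1.2.symm.trans (hy ▸ y.2)
    obtain rfl : e = f := Sym2.map.injective Subtype.val_injective hval
    rfl
  calc Nat.card α = ∑ C : H.ConnectedComponent, Nat.card C := hvertices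
    _ ≤ ∑ C : H.ConnectedComponent, (Nat.card C.toSimpleGraph.edgeSet + 1) :=
      Finset.sum_le_sum fun C _ => C.connected_toSimpleGraph.card_vert_le_card_edgeSet_add_one
    _ = ∑ C : H.ConnectedComponent, Nat.card C.toSimpleGraph.edgeSet +
        Nat.card H.ConnectedComponent := by
      simp [Finset.sum_add_distrib]
    _ ≤ Nat.card H.ConnectedComponent + edgeCount H := by omega

/-- The rank of a graph: its number of vertices minus its number of connected components, that is,
the number of edges of a spanning forest. -/
noncomputable def graphRank (H : SimpleGraph α) : ℕ :=
  Nat.card α - Nat.card H.ConnectedComponent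

theorem graphRank_le_edgeCount [Finite α] (H : SimpleGraph α) : graphRank H ≤ edgeCount H :=
  Nat.sub_le_iff_le_add'.2 (card_le_card_connectedComponent_add_edgeCount H)

theorem graphRank_eliminate_lt [Finite α] (h : H.Adj v u) :
    graphRank (eliminate H v) < graphRank H := by
  have hle : Nat.card (eliminate H v).ConnectedComponent ≤ Nat.card α :=
    Nat.card_le_card_of_surjective _ Quot.mk_surjective
  have hlt := card_connectedComponent_lt_eliminate h
  unfold graphRank
  omega

end Elimination

section TreeDecompositions

variable {α ι : Type*} [DecidableEq α] {H : SimpleGraph α} {bag : ι → Finset α}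
  {T : SimpleGraph ι}

theorem IsTreeDecomp.pathConvex (h : IsTreeDecomp H bag T) (v : α) :
    PathConvex T {X | v ∈ bag X} := fun X Y hX hY p hp Z hZ =>
  h.2.2.2 X Y Z p hp hZ (Finset.mem_inter.2 ⟨hX, hY⟩)

theorem IsTreeDecomp.exists_mem_bag_forall_dist_le (h : IsTreeDecomp H bag T) (r : ι) (v : α) :
    ∃ X, v ∈ bag X ∧ ∀ Z, v ∈ bag Z → T.dist r X ≤ T.dist r Z := by
  obtain ⟨X, hX, hmin⟩ := (measure (T.dist r)).wf.has_min {X | v ∈ bag X} (h.2.1 v)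
  exact ⟨X, hX, fun Z hZ => not_lt.1 (hmin Z hZ)⟩

-- Take the non-isolated vertex whose bag nearest to the root is as deep as possible.
theorem IsTreeDecomp.exists_neighborSet_subset_bag [Finite α] (h : IsTreeDecomp H bag T)
    (hH : H ≠ ⊥) : ∃ v u X, H.Adj v u ∧ v ∈ bag X ∧ H.neighborSet v ⊆ bag X := by
  obtain ⟨r⟩ := h.1.connected.nonempty
  choose top hmem hmin using h.exists_mem_bag_forall_dist_le r
  obtain ⟨v, ⟨u, hvu⟩, hdeepest⟩ := Set.exists_max_image {v | ∃ u, H.Adj v u}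
    (fun v => T.dist r (top v)) (Set.toFinite _) (SimpleGraph.ne_bot_iff_exists_adj.1 hH)
  refine ⟨v, u, top v, hvu, hmem v, fun w hvw => ?_⟩
  obtain ⟨Y, hvY, hwY⟩ := h.2.2.1 v w hvw
  exact (h.pathConvex v).mem_of_dist_le h.1 (h.pathConvex w) (hmem v) (hmin v) (hmem w) (hmin w)
    (hdeepest w ⟨v, hvw.symm⟩) hvY hwY

theorem IsTreeDecomp.eliminate (h : IsTreeDecomp H bag T) {v : α} {X : ι}
    (hX : H.neighborSet v ⊆ bag X) : IsTreeDecomp (eliminate H v) bag T := by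
  refine ⟨h.1, h.2.1, ?_, h.2.2.2⟩
  rintro x y ⟨-, -, -, hxy | ⟨hx, hy⟩⟩
  · exact h.2.2.1 x y hxy
  · exact ⟨X, hX hx, hX hy⟩

theorem IsTreeDecomp.hasElimOrder [Finite α] (h : IsTreeDecomp H bag T) {k : ℕ}
    (hk : ∀ X, (bag X).card ≤ k) : HasElimOrder k H := by
  induction hn : graphRank H using Nat.strong_induction_on generalizing H with
  | _ n ih =>
    by_cases hH : H = ⊥
    · exact hH ▸ .bot
    obtain ⟨v, u, X, hvu, hvX, hX⟩ := h.exists_neighborSet_subset_bag hH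
    have hlt : (H.neighborSet v).ncard < k :=
      calc (H.neighborSet v).ncard < (bag X : Set α).ncard :=
            Set.ncard_lt_ncard ⟨hX, fun hsub => H.irrefl (hsub hvX)⟩
        _ ≤ k := by rw [Set.ncard_coe_finset]; exact hk X
    exact .of_eliminate ⟨u, hvu⟩ hlt (ih _ (hn ▸ graphRank_eliminate_lt hvu) (h.eliminate hX) rfl)

theorem exists_isTreeDecomp_treewidth [Fintype α] (H : SimpleGraph α) :
    ∃ (ι : Type) (_ : Fintype ι) (bag : ι → Finset α) (T : SimpleGraph ι),
      IsTreeDecomp H bag T ∧ ∀ X, (bag X).card ≤ treewidth H + 1 := by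
  refine Nat.sInf_mem (s := {w : ℕ | ∃ (ι : Type) (_ : Fintype ι) (bag : ι → Finset α)
    (T : SimpleGraph ι), IsTreeDecomp H bag T ∧ ∀ X : ι, (bag X).card ≤ w + 1})
    ⟨Fintype.card α, Unit, inferInstance, fun _ => Finset.univ, ⊥, ?_, ?_⟩
  · refine ⟨.of_subsingleton, fun v => ⟨(), Finset.mem_univ v⟩,
      fun u v _ => ⟨(), Finset.mem_univ u, Finset.mem_univ v⟩, fun _ _ _ _ _ _ => ?_⟩
    exact Finset.inter_subset_left
  · exact fun _ => (Finset.card_le_univ _).trans (Nat.le_succ _)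

theorem hasElimOrder_treewidth [Fintype α] (H : SimpleGraph α) :
    HasElimOrder (treewidth H + 1) H := by
  obtain ⟨ι, -, bag, T, h, hcard⟩ := exists_isTreeDecomp_treewidth H
  exact h.hasElimOrder hcard

end TreeDecompositions

section ShadowDegree

open scoped Classical

variable {β : Type*} [Fintype β] {F : Finset (Finset β)} {k : ℕ} {δ : ℝ}

/-- Every vertex set contained in a member of the `k`-uniform family `F`, and also the empty set
when `F` is empty, is contained in at least a `δ` proportion of the conceivable number
`|β| ^ (k - |A|)` of members of `F`. -/
structure HasShadowDegree (F : Finset (Finset β)) (k : ℕ) (δ : ℝ) : Prop where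
  sized : (F : Set (Finset β)).Sized k
  le_card : δ * (Fintype.card β : ℝ) ^ k ≤ F.card
  le_degree : ∀ B ∈ F, ∀ A ⊆ B,
    δ * (Fintype.card β : ℝ) ^ (k - A.card) ≤ (F.filter (A ⊆ ·)).card

theorem card_powersetCard_univ_le_pow (β : Type*) [Fintype β] (s : ℕ) :
    (Finset.powersetCard s (Finset.univ : Finset β)).card ≤ Fintype.card β ^ s := by
  rw [Finset.card_powersetCard, Finset.card_univ]
  exact Nat.choose_le_pow _ _

theorem card_filter_superset_le (hF : (F : Set (Finset β)).Sized k) (A : Finset β) :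
    (F.filter (A ⊆ ·)).card ≤ Fintype.card β ^ (k - A.card) :=
  calc (F.filter (A ⊆ ·)).card
      ≤ (Finset.powersetCard (k - A.card) (Finset.univ : Finset β)).card := by
        refine Finset.card_le_card_of_injOn (· \ A) (fun C hC => ?_) fun C hC D hD hCD => ?_
        · obtain ⟨hCF, hAC⟩ := Finset.mem_filter.1 (Finset.mem_coe.1 hC)
          exact Finset.mem_powersetCard_univ.2 (by rw [Finset.card_sdiff_of_subset hAC, hF hCF])
        · obtain ⟨-, hAC⟩ := Finset.mem_filter.1 (Finset.mem_coe.1 hC)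
          obtain ⟨-, hAD⟩ := Finset.mem_filter.1 (Finset.mem_coe.1 hD)
          rw [← Finset.sdiff_union_of_subset hAC, ← Finset.sdiff_union_of_subset hAD]
          exact congrArg (· ∪ A) hCD
    _ ≤ Fintype.card β ^ (k - A.card) := card_powersetCard_univ_le_pow β _

theorem HasShadowDegree.le_one [Nonempty β] (hF : HasShadowDegree F k δ) : δ ≤ 1 := by
  have hcard : (F.card : ℝ) ≤ 1 * (Fintype.card β : ℝ) ^ k := by
    simpa using (Nat.cast_le (α := ℝ)).2 (card_filter_superset_le hF.sized ∅)
  exact le_of_mul_le_mul_right (hF.le_card.trans hcard) (by positivity)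

theorem sum_pow_sub_card_le (k : ℕ) :
    ∑ A : Finset β with A.Nonempty ∧ A.card ≤ k, Fintype.card β ^ (k - A.card) ≤
      k * Fintype.card β ^ k := by
  set S := Finset.univ.filter fun A : Finset β => A.Nonempty ∧ A.card ≤ k
  have himage : S.image Finset.card ⊆ Finset.Icc 1 k := by
    intro s hs
    obtain ⟨A, hA, rfl⟩ := Finset.mem_image.1 hs
    have hA' := (Finset.mem_filter.1 hA).2
    exact Finset.mem_Icc.2 ⟨hA'.1.card_pos, hA'.2⟩
  have hlevel : ∀ s ∈ S.image Finset.card,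
      (S.filter fun A => A.card = s).card • Fintype.card β ^ (k - s) ≤ Fintype.card β ^ k := by
    intro s hs
    have hcard : (S.filter fun A => A.card = s).card ≤ Fintype.card β ^ s :=
      calc (S.filter fun A => A.card = s).card
          ≤ (Finset.powersetCard s (Finset.univ : Finset β)).card :=
            Finset.card_le_card fun A hA =>
              Finset.mem_powersetCard_univ.2 (Finset.mem_filter.1 hA).2
        _ ≤ Fintype.card β ^ s := card_powersetCard_univ_le_pow β s
    calc (S.filter fun A => A.card = s).card • Fintype.card β ^ (k - s)
        ≤ Fintype.card β ^ s * Fintype.card β ^ (k - s) := Nat.mul_le_mul_right _ hcard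
      _ = Fintype.card β ^ k := by
        rw [← pow_add, Nat.add_sub_cancel' (Finset.mem_Icc.1 (himage hs)).2]
  calc ∑ A ∈ S, Fintype.card β ^ (k - A.card)
      = ∑ s ∈ S.image Finset.card,
          (S.filter fun A => A.card = s).card • Fintype.card β ^ (k - s) :=
        Finset.sum_comp (fun s => Fintype.card β ^ (k - s)) Finset.card
    _ ≤ (S.image Finset.card).card • Fintype.card β ^ k := Finset.sum_le_card_nsmul _ _ _ hlevel
    _ ≤ k * Fintype.card β ^ k := by
        refine Nat.mul_le_mul_right _ ((Finset.card_le_card himage).trans ?_)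
        simp only [Nat.card_Icc, add_tsub_cancel_right, le_refl]

theorem sum_shadow_le {F₀ : Finset (Finset β)} (hF₀ : (F₀ : Set (Finset β)).Sized k)
    (hδ : 0 ≤ δ) :
    ∑ A : Finset β with A.Nonempty ∧ ∃ B ∈ F₀, A ⊆ B,
      δ * (Fintype.card β : ℝ) ^ (k - A.card) ≤ k * (δ * (Fintype.card β : ℝ) ^ k) := by
  calc ∑ A : Finset β with A.Nonempty ∧ ∃ B ∈ F₀, A ⊆ B, δ * (Fintype.card β : ℝ) ^ (k - A.card)
      ≤ ∑ A : Finset β with A.Nonempty ∧ A.card ≤ k,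
          δ * (Fintype.card β : ℝ) ^ (k - A.card) := by
        refine Finset.sum_le_sum_of_subset_of_nonneg
          (Finset.monotone_filter_right _ ?_) fun A _ _ => by positivity
        rintro A - ⟨hA, B, hB, hAB⟩
        exact ⟨hA, (Finset.card_le_card hAB).trans (hF₀ hB).le⟩
    _ ≤ δ * (k * (Fintype.card β : ℝ) ^ k) := by
        rw [← Finset.mul_sum]
        exact mul_le_mul_of_nonneg_left (mod_cast sum_pow_sub_card_le k) hδ
    _ = k * (δ * (Fintype.card β : ℝ) ^ k) := by ring

-- Each set in the shadow is charged `δ |β| ^ (k - |A|)`. A subfamily maximising its size minus the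
-- total charge has no `A` of small degree: dropping the members above `A` would save its charge.
theorem exists_subset_hasShadowDegree {F₀ : Finset (Finset β)}
    (hF₀ : (F₀ : Set (Finset β)).Sized k) (hδ : 0 ≤ δ)
    (hcard : (k + 1) * (δ * (Fintype.card β : ℝ) ^ k) ≤ F₀.card) :
    ∃ F ⊆ F₀, HasShadowDegree F k δ := by
  let charge : Finset β → ℝ := fun A => δ * (Fintype.card β : ℝ) ^ (k - A.card)
  let shadow : Finset (Finset β) → Finset (Finset β) := fun F =>
    Finset.univ.filter fun A => A.Nonempty ∧ ∃ B ∈ F, A ⊆ B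
  have hcharge : ∀ A, 0 ≤ charge A := fun A => by positivity
  obtain ⟨F, hF, hmax⟩ := Finset.exists_max_image F₀.powerset
    (fun F => (F.card : ℝ) - ∑ A ∈ shadow F, charge A) ⟨F₀, Finset.mem_powerset_self F₀⟩
  have hFF₀ : F ⊆ F₀ := Finset.mem_powerset.1 hF
  have hle_card : δ * (Fintype.card β : ℝ) ^ k ≤ F.card := by
    have hF₀_le := hmax F₀ (Finset.mem_powerset_self F₀)
    have htotal : ∑ A ∈ shadow F₀, charge A ≤ _ := sum_shadow_le hF₀ hδ
    have hnonneg := Finset.sum_nonneg fun A (_ : A ∈ shadow F) => hcharge A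
    linarith
  refine ⟨F, hFF₀, fun _ hB => hF₀ (hFF₀ hB), hle_card, fun B hB A hAB => ?_⟩
  obtain rfl | hA := A.eq_empty_or_nonempty
  · simpa using hle_card
  have hremove := hmax (F.filter (¬ A ⊆ ·))
    (Finset.mem_powerset.2 ((Finset.filter_subset _ _).trans hFF₀))
  have hsplit : ((F.filter (A ⊆ ·)).card : ℝ) + (F.filter (¬ A ⊆ ·)).card = F.card :=
    mod_cast Finset.card_filter_add_card_filter_not _
  have hshadow : shadow (F.filter (¬ A ⊆ ·)) ⊆ (shadow F).erase A := by
    intro A' hA'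
    obtain ⟨-, hne, C, hC, hAC⟩ := Finset.mem_filter.1 hA'
    obtain ⟨hCF, hnot⟩ := Finset.mem_filter.1 hC
    refine Finset.mem_erase.2 ⟨?_, Finset.mem_filter.2 ⟨Finset.mem_univ _, hne, C, hCF, hAC⟩⟩
    rintro rfl
    exact hnot hAC
  have hsum := Finset.sum_le_sum_of_subset_of_nonneg hshadow fun A' _ _ => hcharge A'
  have herase := Finset.sum_erase_add (shadow F) charge
    (Finset.mem_filter.2 ⟨Finset.mem_univ A, hA, B, hB, hAB⟩)
  change charge A ≤ _
  linarith

end ShadowDegree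

section CliqueEmbeddings

variable {α β : Type*} {H : SimpleGraph α} {F : Finset (Finset β)} {C K R : Set α} {v : α}
  {φ ψ : α → β}

/-- `φ` maps `C` injectively into a member of the family `F`. -/
def EmbedsIn (F : Finset (Finset β)) (C : Set α) (φ : α → β) : Prop :=
  Set.InjOn φ C ∧ ∃ B ∈ F, Set.MapsTo φ C B

theorem EmbedsIn.mono (h : EmbedsIn F K φ) (hCK : C ⊆ K) : EmbedsIn F C φ :=
  let ⟨hinj, B, hB, hmaps⟩ := h
  ⟨hinj.mono hCK, B, hB, hmaps.mono_left hCK⟩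

theorem EmbedsIn.congr (h : EmbedsIn F C φ) (hψ : Set.EqOn φ ψ C) : EmbedsIn F C ψ :=
  let ⟨hinj, B, hB, hmaps⟩ := h
  ⟨hinj.congr hψ, B, hB, hmaps.congr hψ⟩

/-- `φ` maps every clique of `H` with at least two vertices injectively into a member of `F`. When
the members of `F` are cliques of a graph `G`, this is stronger than being a homomorphism. Smaller
cliques are left out so that the images of isolated vertices are unconstrained. -/
def IsCliqueEmbedding (F : Finset (Finset β)) (H : SimpleGraph α) (φ : α → β) : Prop :=
  ∀ C : Set α, H.IsClique C → C.Nontrivial → EmbedsIn F C φ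

theorem isCliqueEmbedding_bot (φ : α → β) : IsCliqueEmbedding F ⊥ φ := by
  rintro C hC ⟨x, hx, y, hy, hxy⟩
  exact (hC hx hy hxy).elim

theorem IsCliqueEmbedding.embedsIn_of_adj (hφ : IsCliqueEmbedding F H φ) {x y : α}
    (hxy : H.Adj x y) : EmbedsIn F {x, y} φ :=
  hφ {x, y} (SimpleGraph.isClique_pair.2 fun _ => hxy) (Set.nontrivial_pair hxy.ne)

theorem IsCliqueEmbedding.eq_empty_or_embedsIn (hφ : IsCliqueEmbedding F H φ)
    (hK : H.IsClique K) (hne : ∀ x ∈ K, (H.neighborSet x).Nonempty) : K = ∅ ∨ EmbedsIn F K φ := by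
  obtain hsub | hK' := K.subsingleton_or_nontrivial
  · obtain rfl | ⟨x, rfl⟩ := hsub.eq_empty_or_singleton
    · exact .inl rfl
    · obtain ⟨y, hxy⟩ := hne x rfl
      exact .inr ((hφ.embedsIn_of_adj hxy).mono (Set.singleton_subset_iff.2 (Or.inl rfl)))
  · exact .inr (hφ K hK hK')

theorem IsCliqueEmbedding.of_eqOn_compl (hφ : IsCliqueEmbedding F (eliminate H v) φ)
    (hv : v ∈ R) (hR : ∀ x ∈ R, H.neighborSet x ⊆ R ∪ K) (hψφ : Set.EqOn ψ φ Rᶜ)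
    (hψ : EmbedsIn F (R ∪ K) ψ) : IsCliqueEmbedding F H ψ := by
  intro C hC hC'
  by_cases hCR : ∃ x ∈ C, x ∈ R
  · obtain ⟨x, hxC, hxR⟩ := hCR
    refine hψ.mono fun y hy => ?_
    obtain rfl | hxy := eq_or_ne x y
    · exact Or.inl hxR
    · exact hR x hxR (hC hxC hy hxy)
  · have hCR' : C ⊆ Rᶜ := fun x hxC hxR => hCR ⟨x, hxC, hxR⟩
    have hne : ∀ x ∈ C, x ≠ v := fun x hx hxv => hCR' hx (hxv ▸ hv)
    have hclique : (eliminate H v).IsClique C := fun x hx y hy hxy =>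
      ⟨hxy, hne x hx, hne y hy, Or.inl (hC hx hy hxy)⟩
    exact (hφ C hclique hC').congr fun x hx => (hψφ (hCR' hx)).symm

theorem isClique_eliminate_neighborSet (H : SimpleGraph α) (v : α) :
    (eliminate H v).IsClique (H.neighborSet v) := fun _ hx _ hy hxy =>
  ⟨hxy, hx.ne', hy.ne', Or.inr ⟨hx, hy⟩⟩

-- A neighbour of `v` that becomes isolated was only adjacent to `v`. Its image is not controlled by
-- a clique embedding of `eliminate H v`, so it has to be chosen anew together with that of `v`.
theorem exists_resampling_set [Finite α] {k : ℕ} (hne : (H.neighborSet v).Nonempty)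
    (hlt : (H.neighborSet v).ncard < k) :
    ∃ R K : Finset α, Disjoint R K ∧ R.card + K.card ≤ k ∧ v ∈ R ∧
      (∀ x ∈ R, H.neighborSet x ⊆ R ∪ K) ∧ (eliminate H v).IsClique K ∧
      ∀ x ∈ K, ((eliminate H v).neighborSet x).Nonempty := by
  classical
  by_cases hK : ∀ x ∈ H.neighborSet v, ((eliminate H v).neighborSet x).Nonempty
  · have hfin : (H.neighborSet v).Finite := Set.toFinite _
    refine ⟨{v}, hfin.toFinset, ?_, ?_, Finset.mem_singleton_self v, ?_, ?_, ?_⟩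
    · simp only [Finset.disjoint_singleton_left, Set.Finite.mem_toFinset,
        SimpleGraph.mem_neighborSet, SimpleGraph.irrefl, not_false_eq_true]
    · rw [Finset.card_singleton, ← Set.ncard_eq_toFinset_card]
      omega
    · intro x hx
      rw [Finset.mem_singleton.1 hx, hfin.coe_toFinset]
      exact Set.subset_union_right
    · rw [hfin.coe_toFinset]
      exact isClique_eliminate_neighborSet H v
    · exact fun x hx => hK x (hfin.mem_toFinset.1 hx)
  · push Not at hK
    obtain ⟨u, hvu, hu⟩ := hK
    have hisolated : ∀ y, ¬ (eliminate H v).Adj u y := fun y h => Set.notMem_empty y (hu ▸ h)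
    have hNv : H.neighborSet v ⊆ {u} := fun w hw => by
      by_contra hwu
      exact hisolated w (isClique_eliminate_neighborSet H v hvu hw (Ne.symm hwu))
    have hNu : H.neighborSet u ⊆ {v} := fun w hw => by
      by_contra hwv
      exact hisolated w ⟨hw.ne, hvu.ne', hwv, Or.inl hw⟩
    have hpos : 0 < (H.neighborSet v).ncard := (Set.ncard_pos (Set.toFinite _)).2 hne
    refine ⟨{v, u}, ∅, Finset.disjoint_empty_right _, ?_, Finset.mem_insert_self v _, ?_, ?_, ?_⟩
    · rw [Finset.card_pair hvu.ne, Finset.card_empty]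
      omega
    · intro x hx w hw
      rw [Finset.mem_insert, Finset.mem_singleton] at hx
      simp only [Finset.coe_pair, Finset.coe_empty, Set.union_empty]
      rcases hx with hx | hx
      · exact Or.inr (hNv (hx ▸ hw))
      · exact Or.inl (hNu (hx ▸ hw))
    · simp only [Finset.coe_empty, SimpleGraph.isClique_empty]
    · simp only [Finset.notMem_empty, false_imp_iff, implies_true]

end CliqueEmbeddings

section CountingEmbeddings

open scoped Classical

variable {α β : Type*} {H : SimpleGraph α} {F : Finset (Finset β)}
  {k : ℕ} {δ : ℝ}

theorem exists_extension_mapsTo [Nonempty β] {R K : Finset α} (hRK : Disjoint R K) {φ : α → β}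
    (hinj : Set.InjOn φ K) {C : Finset β} (hC : Set.MapsTo φ K C)
    (hcard : R.card + K.card ≤ C.card) :
    ∃ ψ : α → β, Set.EqOn ψ φ (R : Set α)ᶜ ∧ Set.InjOn ψ (R ∪ K : Set α) ∧
      Set.MapsTo ψ (R ∪ K : Set α) C := by
  have himage : K.image φ ⊆ C := Finset.image_subset_iff.2 hC
  have hfree : R.card ≤ (C \ K.image φ).card := by
    rw [Finset.card_sdiff_of_subset himage, Finset.card_image_of_injOn hinj]
    omega
  obtain ⟨f, hf, hfinj⟩ : ∃ f : α → β, (∀ x ∈ R, f x ∈ C \ K.image φ) ∧ Set.InjOn f R := by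
    have hle : (R : Set α).encard ≤ ((C \ K.image φ : Finset β) : Set β).encard := by
      simpa only [Set.encard_coe_eq_coe_finsetCard, Nat.cast_le] using hfree
    exact R.finite_toSet.exists_injOn_of_encard_le hle
  have hR : Set.EqOn (R.piecewise f φ) f R := fun x hx => Finset.piecewise_eq_of_mem _ _ _ hx
  have hRc : Set.EqOn (R.piecewise f φ) φ (R : Set α)ᶜ := fun x hx =>
    Finset.piecewise_eq_of_notMem _ _ _ hx
  have hK : Set.EqOn (R.piecewise f φ) φ K := hRc.mono fun x hxK hxR =>
    Finset.disjoint_left.1 hRK hxR hxK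
  refine ⟨R.piecewise f φ, hRc, ?_, ?_⟩
  · refine (Set.injOn_union (Finset.disjoint_coe.2 hRK)).2
      ⟨hfinj.congr hR.symm, hinj.congr hK.symm, fun x hx y hy hxy => ?_⟩
    rw [hR hx, hK hy] at hxy
    exact (Finset.mem_sdiff.1 (hf x hx)).2 (hxy ▸ Finset.mem_image_of_mem φ hy)
  · rintro x (hx | hx)
    · rw [hR hx]
      exact (Finset.mem_sdiff.1 (hf x hx)).1
    · rw [hK hx]
      exact hC hx

theorem card_filter_mapsTo_le [Fintype β] (hF : (F : Set (Finset β)).Sized k) {S : Finset α}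
    {ψ : α → β} (hψ : Set.InjOn ψ S) :
    (F.filter fun C : Finset β => Set.MapsTo ψ S (C : Set β)).card ≤
      Fintype.card β ^ (k - S.card) := by
  rw [← Finset.card_image_of_injOn hψ]
  refine (Finset.card_le_card (Finset.monotone_filter_right _ ?_)).trans
    (card_filter_superset_le hF _)
  exact fun C _ hC => Finset.image_subset_iff.2 hC

theorem HasShadowDegree.le_card_filter_image_subset [Fintype β] (hF : HasShadowDegree F k δ)
    {K : Finset α} {φ : α → β} (hφ : (K : Set α) = ∅ ∨ EmbedsIn F K φ) :
    δ * (Fintype.card β : ℝ) ^ (k - K.card) ≤ (F.filter (K.image φ ⊆ ·)).card := by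
  obtain h | ⟨hinj, B, hB, hmaps⟩ := hφ
  · obtain rfl := Finset.coe_eq_empty.1 h
    simpa using hF.le_card
  · rw [← Finset.card_image_of_injOn hinj]
    exact hF.le_degree B hB _ (Finset.image_subset_iff.2 hmaps)

variable [Fintype α] [Fintype β]

theorem HasShadowDegree.le_card_extensions [Nonempty β] (hF : HasShadowDegree F k δ)
    {R K : Finset α} (hRK : Disjoint R K) (hcard : R.card + K.card ≤ k) {φ : α → β}
    (hφ : (K : Set α) = ∅ ∨ EmbedsIn F K φ) :
    δ * (Fintype.card β : ℝ) ^ R.card ≤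
      (Finset.univ.filter fun ψ : α → β =>
        Set.EqOn ψ φ (R : Set α)ᶜ ∧ EmbedsIn F (R ∪ K : Set α) ψ).card := by
  set E := Finset.univ.filter fun ψ : α → β =>
    Set.EqOn ψ φ (R : Set α)ᶜ ∧ EmbedsIn F (R ∪ K : Set α) ψ
  have hinj : Set.InjOn φ K := hφ.elim (fun h => h ▸ Set.injOn_empty φ) And.left
  have hdegree : δ * (Fintype.card β : ℝ) ^ (k - K.card) ≤ (F.filter (K.image φ ⊆ ·)).card :=
    hF.le_card_filter_image_subset hφ
  let r : Finset β → (α → β) → Prop := fun C ψ => Set.MapsTo ψ ((R ∪ K : Finset α) : Set α) C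
  have habove : ∀ C ∈ F.filter (K.image φ ⊆ ·), 1 ≤ (E.bipartiteAbove r C).card := by
    intro C hC
    obtain ⟨hCF, hKC⟩ := Finset.mem_filter.1 hC
    obtain ⟨ψ, hψφ, hψ, hmaps⟩ := exists_extension_mapsTo hRK hinj
      (Finset.image_subset_iff.1 hKC) (hcard.trans (hF.sized hCF).ge)
    exact Finset.card_pos.2 ⟨ψ, Finset.mem_filter.2
      ⟨Finset.mem_filter.2 ⟨Finset.mem_univ ψ, hψφ, hψ, C, hCF, hmaps⟩,
        by rwa [← Finset.coe_union] at hmaps⟩⟩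
  have hbelow : ∀ ψ ∈ E, ((F.filter (K.image φ ⊆ ·)).bipartiteBelow r ψ).card ≤
      Fintype.card β ^ (k - (R.card + K.card)) := by
    intro ψ hψ
    have hψinj : Set.InjOn ψ ((R ∪ K : Finset α) : Set α) := by
      rw [Finset.coe_union]
      exact (Finset.mem_filter.1 hψ).2.2.1
    rw [← Finset.card_union_of_disjoint hRK]
    exact (Finset.card_le_card (Finset.filter_subset_filter _ (Finset.filter_subset _ F))).trans
      (card_filter_mapsTo_le hF.sized hψinj)
  have hcount : ((F.filter (K.image φ ⊆ ·)).card : ℝ) ≤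
      E.card * (Fintype.card β : ℝ) ^ (k - (R.card + K.card)) := by
    simpa using (Nat.cast_le (α := ℝ)).2 (Finset.card_mul_le_card_mul _ habove hbelow)
  refine le_of_mul_le_mul_right (a := (Fintype.card β : ℝ) ^ (k - (R.card + K.card))) ?_
    (by positivity)
  calc δ * (Fintype.card β : ℝ) ^ R.card * (Fintype.card β : ℝ) ^ (k - (R.card + K.card))
      = δ * (Fintype.card β : ℝ) ^ (k - K.card) := by
        rw [mul_assoc, ← pow_add]
        congr 2
        omega
    _ ≤ _ := hdegree.trans hcount

theorem card_eqOn_compl_le (R : Finset α) (ψ : α → β) :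
    (Finset.univ.filter fun φ : α → β => Set.EqOn ψ φ (R : Set α)ᶜ).card ≤
      Fintype.card β ^ R.card := by
  rw [← Fintype.card_coe R, ← Fintype.card_fun, ← Finset.card_univ]
  refine Finset.card_le_card_of_injOn (fun φ x => φ x)
    (fun _ _ => Finset.mem_coe.2 (Finset.mem_univ _)) ?_
  intro φ hφ φ' hφ' heq
  funext x
  by_cases hx : x ∈ R
  · exact congrFun heq ⟨x, hx⟩
  · exact ((Finset.mem_filter.1 hφ).2 hx).symm.trans ((Finset.mem_filter.1 hφ').2 hx)

theorem mul_card_le_card_of_resampling [Nonempty β] {P Q : (α → β) → Prop} (R : Finset α)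
    (h : ∀ φ, P φ → δ * (Fintype.card β : ℝ) ^ R.card ≤
      (Finset.univ.filter fun ψ : α → β => Set.EqOn ψ φ (R : Set α)ᶜ ∧ Q ψ).card) :
    δ * (Finset.univ.filter P).card ≤ (Finset.univ.filter Q).card := by
  have habove : ∀ φ ∈ Finset.univ.filter P, δ * (Fintype.card β : ℝ) ^ R.card ≤
      ((Finset.univ.filter Q).bipartiteAbove
        (fun φ ψ => Set.EqOn ψ φ (R : Set α)ᶜ) φ).card := by
    intro φ hφ
    refine (h φ (Finset.mem_filter.1 hφ).2).trans_eq ?_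
    simp only [Finset.bipartiteAbove, Finset.filter_filter, and_comm]
  have hbelow : ∀ ψ ∈ Finset.univ.filter Q, (((Finset.univ.filter P).bipartiteBelow
      (fun φ ψ => Set.EqOn ψ φ (R : Set α)ᶜ) ψ).card : ℝ) ≤ (Fintype.card β : ℝ) ^ R.card := by
    intro ψ _
    exact_mod_cast (Finset.card_le_card (Finset.filter_subset_filter _
      (Finset.subset_univ _))).trans (card_eqOn_compl_le R ψ)
  have hcount := Finset.card_nsmul_le_card_nsmul _ habove hbelow
  rw [nsmul_eq_mul, nsmul_eq_mul, ← mul_assoc] at hcount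
  rw [mul_comm]
  exact le_of_mul_le_mul_right hcount (by positivity)

theorem HasShadowDegree.mul_card_isCliqueEmbedding_eliminate_le [Nonempty β]
    (hF : HasShadowDegree F k δ) {v : α} (hne : (H.neighborSet v).Nonempty)
    (hlt : (H.neighborSet v).ncard < k) :
    δ * (Finset.univ.filter (IsCliqueEmbedding F (eliminate H v))).card ≤
      (Finset.univ.filter (IsCliqueEmbedding F H)).card := by
  obtain ⟨R, K, hRK, hcard, hv, hR, hK, hK'⟩ := exists_resampling_set hne hlt
  refine mul_card_le_card_of_resampling R fun φ hφ => ?_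
  refine (hF.le_card_extensions hRK hcard (hφ.eq_empty_or_embedsIn hK hK')).trans ?_
  exact Nat.cast_le.2 (Finset.card_le_card (Finset.monotone_filter_right _
    fun ψ _ hψ => ⟨hψ.1, hφ.of_eqOn_compl hv hR hψ.1 hψ.2⟩))

theorem HasElimOrder.le_card_isCliqueEmbedding [Nonempty β] (hH : HasElimOrder k H)
    (hδ : 0 ≤ δ) (hF : HasShadowDegree F k δ) :
    δ ^ graphRank H * (Fintype.card β : ℝ) ^ Fintype.card α ≤
      (Finset.univ.filter (IsCliqueEmbedding F H)).card := by
  induction hH with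
  | bot =>
    rw [Finset.filter_true_of_mem fun φ _ => isCliqueEmbedding_bot φ, Finset.card_univ,
      Fintype.card_fun, Nat.cast_pow]
    exact mul_le_of_le_one_left (by positivity) (pow_le_one₀ hδ hF.le_one)
  | @of_eliminate H v hne hlt _ ih =>
    have hrank : graphRank (eliminate H v) + 1 ≤ graphRank H :=
      graphRank_eliminate_lt hne.some_mem
    calc δ ^ graphRank H * (Fintype.card β : ℝ) ^ Fintype.card α
        ≤ δ ^ (graphRank (eliminate H v) + 1) * (Fintype.card β : ℝ) ^ Fintype.card α :=
          mul_le_mul_of_nonneg_right (pow_le_pow_of_le_one hδ hF.le_one hrank) (by positivity)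
      _ = δ * (δ ^ graphRank (eliminate H v) *
            (Fintype.card β : ℝ) ^ Fintype.card α) := by ring
      _ ≤ δ * (Finset.univ.filter (IsCliqueEmbedding F (eliminate H v))).card :=
          mul_le_mul_of_nonneg_left ih hδ
      _ ≤ (Finset.univ.filter (IsCliqueEmbedding F H)).card :=
          hF.mul_card_isCliqueEmbedding_eliminate_le hne hlt

end CountingEmbeddings

section HomomorphismDensities

open scoped Classical

variable {α β : Type*} {H : SimpleGraph α} {G : SimpleGraph β}
  {F : Finset (Finset β)} {k : ℕ}

theorem IsCliqueEmbedding.adj (hF : ∀ C ∈ F, G.IsClique C) {φ : α → β}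
    (hφ : IsCliqueEmbedding F H φ) {x y : α} (hxy : H.Adj x y) : G.Adj (φ x) (φ y) := by
  obtain ⟨hinj, C, hC, hmaps⟩ := hφ.embedsIn_of_adj hxy
  have hx : x ∈ ({x, y} : Set α) := Or.inl rfl
  have hy : y ∈ ({x, y} : Set α) := Or.inr rfl
  exact hF C hC (hmaps hx) (hmaps hy) (hinj.ne hx hy hxy.ne)

theorem succ_mul_pow_self_pos (k : ℕ) : (0 : ℝ) < (k + 1) * (k : ℝ) ^ k := by
  have hpow : (0 : ℝ) < (k : ℝ) ^ k := mod_cast Nat.pow_self_pos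
  positivity

variable [Fintype β]

/-- The ordered `r`-cliques of `G` with all vertices in `X`. -/
noncomputable def orderedCliques (G : SimpleGraph β) (r : ℕ) (X : Finset β) :
    Finset (Fin r → β) :=
  Finset.univ.filter fun f => (∀ i, f i ∈ X) ∧ Pairwise fun i j => G.Adj (f i) (f j)

theorem mem_orderedCliques {r : ℕ} {X : Finset β} {f : Fin r → β} :
    f ∈ orderedCliques G r X ↔ (∀ i, f i ∈ X) ∧ Pairwise fun i j => G.Adj (f i) (f j) := by
  simp only [orderedCliques, Finset.mem_filter, Finset.mem_univ, true_and]

theorem card_orderedCliques_le_mul_card_cliqueFinset (G : SimpleGraph β) (k : ℕ) (X : Finset β) :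
    (orderedCliques G k X).card ≤ k ^ k * (G.cliqueFinset k).card := by
  refine Finset.card_le_mul_card_image_of_maps_to
    (f := fun f : Fin k → β => Finset.univ.image f) (fun f hf => ?_) _ fun C hC => ?_
  · have hadj := (mem_orderedCliques.1 hf).2
    have hinj : Function.Injective f := fun i j hij => by
      by_contra hne
      exact (hadj hne).ne hij
    refine SimpleGraph.mem_cliqueFinset_iff.2 ⟨?_, ?_⟩
    · rw [Finset.coe_image, Finset.coe_univ, Set.image_univ]
      rintro _ ⟨i, rfl⟩ _ ⟨j, rfl⟩ hij
      exact hadj fun h => hij (congrArg f h)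
    · rw [Finset.card_image_of_injective _ hinj, Finset.card_univ, Fintype.card_fin]
  · calc _ ≤ (Fintype.piFinset fun _ : Fin k => C).card := by
          refine Finset.card_le_card fun f hf => Fintype.mem_piFinset.2 fun i => ?_
          rw [← (Finset.mem_filter.1 hf).2]
          exact Finset.mem_image_of_mem f (Finset.mem_univ i)
      _ = k ^ k := by
          rw [Fintype.card_piFinset_const, (SimpleGraph.mem_cliqueFinset_iff.1 hC).card_eq]

variable [Fintype α]

theorem natCard_hom (H : SimpleGraph α) (G : SimpleGraph β) : Nat.card (H →g G) =
    (Finset.univ.filter fun φ : α → β => ∀ x y, H.Adj x y → G.Adj (φ x) (φ y)).card := by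
  rw [← Fintype.card_subtype, ← Nat.card_eq_fintype_card]
  exact Nat.card_congr
    { toFun := fun f => ⟨f, fun _ _ h => f.map_adj h⟩
      invFun := fun f => ⟨f.1, fun h => f.2 _ _ h⟩ }

theorem natCard_hom_top (G : SimpleGraph β) (r : ℕ) :
    Nat.card ((⊤ : SimpleGraph (Fin r)) →g G) = (orderedCliques G r Finset.univ).card := by
  rw [natCard_hom]
  congr 1
  ext f
  simp only [mem_orderedCliques, Finset.mem_filter, Finset.mem_univ, true_and, implies_true,
    SimpleGraph.top_adj, Pairwise]

theorem homDensity_top_mul_pow_le [Nonempty β] (G : SimpleGraph β) (k : ℕ) :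
    homDensity (⊤ : SimpleGraph (Fin k)) G * (Fintype.card β : ℝ) ^ k ≤
      (k : ℝ) ^ k * (G.cliqueFinset k).card := by
  rw [homDensity, natCard_hom_top, Fintype.card_fin, div_mul_cancel₀ _ (by positivity)]
  exact_mod_cast card_orderedCliques_le_mul_card_cliqueFinset G k Finset.univ

theorem homDensity_nonneg (H : SimpleGraph α) (G : SimpleGraph β) : 0 ≤ homDensity H G := by
  unfold homDensity
  positivity

theorem homDensity_le_one (H : SimpleGraph α) (G : SimpleGraph β) : homDensity H G ≤ 1 := by
  refine div_le_one_of_le₀ ?_ (by positivity)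
  have hle : Nat.card (H →g G) ≤ Nat.card (α → β) :=
    Nat.card_le_card_of_injective _ DFunLike.coe_injective
  rw [Nat.card_fun, Nat.card_eq_fintype_card (α := β), Nat.card_eq_fintype_card (α := α)] at hle
  exact_mod_cast hle

theorem HasElimOrder.div_pow_graphRank_le_homDensity [Nonempty β] (hH : HasElimOrder k H)
    (G : SimpleGraph β) :
    (homDensity (⊤ : SimpleGraph (Fin k)) G / ((k + 1) * (k : ℝ) ^ k)) ^ graphRank H ≤
      homDensity H G := by
  set D : ℝ := (k + 1) * (k : ℝ) ^ k with hD
  set δ := homDensity (⊤ : SimpleGraph (Fin k)) G / D with hδ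
  have hD0 : 0 < D := succ_mul_pow_self_pos k
  have hδ0 : 0 ≤ δ := div_nonneg (homDensity_nonneg _ _) hD0.le
  have hcliques : (k + 1) * (δ * (Fintype.card β : ℝ) ^ k) ≤ (G.cliqueFinset k).card := by
    have hk : (k : ℝ) ^ k ≠ 0 := mod_cast (Nat.pow_self_pos (n := k)).ne'
    calc (k + 1) * (δ * (Fintype.card β : ℝ) ^ k)
        = homDensity (⊤ : SimpleGraph (Fin k)) G * (Fintype.card β : ℝ) ^ k / (k : ℝ) ^ k := by
          rw [hδ, hD]
          field_simp
      _ ≤ (G.cliqueFinset k).card :=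
          div_le_of_le_mul₀ (by positivity) (by positivity)
            ((homDensity_top_mul_pow_le G k).trans_eq (mul_comm _ _))
  obtain ⟨F, hFG, hF⟩ := exists_subset_hasShadowDegree
    (fun C hC => (SimpleGraph.mem_cliqueFinset_iff.1 hC).card_eq) hδ0 hcliques
  have hclique : ∀ C ∈ F, G.IsClique C := fun C hC =>
    (SimpleGraph.mem_cliqueFinset_iff.1 (hFG hC)).isClique
  rw [homDensity, le_div_iff₀ (by positivity), natCard_hom]
  refine (hH.le_card_isCliqueEmbedding hδ0 hF).trans (Nat.cast_le.2 (Finset.card_le_card ?_))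
  exact Finset.monotone_filter_right _ fun φ _ hφ x y hxy => hφ.adj hclique hxy

end HomomorphismDensities

section TensorPower

variable {α β ι : Type*}

/-- The tensor (categorical) power of a graph, with factors indexed by `ι`. -/
def tensorPower (ι : Type*) [Nonempty ι] (G : SimpleGraph β) : SimpleGraph (ι → β) where
  Adj f g := ∀ i, G.Adj (f i) (g i)
  symm := ⟨fun _ _ h i => (h i).symm⟩
  loopless := ⟨fun _ h => (h (Classical.arbitrary ι)).ne rfl⟩

/-- Homomorphisms into a tensor power are families of homomorphisms. -/
def homTensorPowerEquiv [Nonempty ι] (H : SimpleGraph α) (G : SimpleGraph β) :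
    (H →g tensorPower ι G) ≃ (ι → (H →g G)) where
  toFun f i := ⟨fun x => f x i, fun h => f.map_adj h i⟩
  invFun f := ⟨fun x i => f i x, fun h i => (f i).map_adj h⟩

theorem homDensity_tensorPower [Fintype α] [Fintype β] [Fintype ι] [DecidableEq ι]
    [Nonempty ι] (H : SimpleGraph α) (G : SimpleGraph β) :
    homDensity H (tensorPower ι G) = homDensity H G ^ Fintype.card ι := by
  rw [homDensity, homDensity, Nat.card_congr (homTensorPowerEquiv H G), Nat.card_fun,
    Nat.card_eq_fintype_card (α := ι), Fintype.card_fun, div_pow, Nat.cast_pow, Nat.cast_pow,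
    ← pow_mul, ← pow_mul, mul_comm (Fintype.card ι)]

theorem le_of_forall_mul_pow_succ_le {a b c : ℝ} (hc : 0 < c) (hb : 0 ≤ b)
    (h : ∀ j : ℕ, c * a ^ (j + 1) ≤ b ^ (j + 1)) : a ≤ b := by
  by_contra! hab
  have ha : 0 < a := hb.trans_lt hab
  obtain ⟨j, hj⟩ := exists_pow_lt_of_lt_one hc ((div_lt_one ha).2 hab)
  have hle : c ≤ (b / a) ^ (j + 1) := by
    rw [div_pow, le_div_iff₀ (by positivity)]
    exact h j
  have hsucc : (b / a) ^ (j + 1) ≤ (b / a) ^ j :=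
    pow_le_pow_of_le_one (by positivity) ((div_lt_one ha).2 hab).le j.le_succ
  linarith

theorem HasElimOrder.pow_graphRank_le_homDensity [Fintype α] [Fintype β] [Nonempty β]
    {H : SimpleGraph α} {k : ℕ} (hH : HasElimOrder k H) (G : SimpleGraph β) :
    homDensity (⊤ : SimpleGraph (Fin k)) G ^ graphRank H ≤ homDensity H G := by
  have hD : (0 : ℝ) < (k + 1) * (k : ℝ) ^ k := succ_mul_pow_self_pos k
  refine le_of_forall_mul_pow_succ_le (c := (((k + 1) * (k : ℝ) ^ k) ^ graphRank H)⁻¹)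
    (by positivity) (homDensity_nonneg H G) fun j => ?_
  have hj := hH.div_pow_graphRank_le_homDensity (tensorPower (Fin (j + 1)) G)
  rw [homDensity_tensorPower, homDensity_tensorPower, Fintype.card_fin, div_pow, pow_right_comm,
    div_eq_inv_mul] at hj
  exact hj

end TensorPower

section LocallyDenseGraphs

open scoped Classical

theorem card_mul_pow_le_sum_pow {ι : Type*} {s : Finset ι} {f : ι → ℝ} {a : ℝ} (ha : 0 ≤ a)
    (hf : ∀ i ∈ s, 0 ≤ f i) (h : s.card * a ≤ ∑ i ∈ s, f i) (k : ℕ) :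
    s.card * a ^ k ≤ ∑ i ∈ s, f i ^ k := by
  rcases s.eq_empty_or_nonempty with rfl | hs
  · simp only [Finset.card_empty, Nat.cast_zero, zero_mul, Finset.sum_empty, le_refl]
  have hcard : (0 : ℝ) < s.card := mod_cast hs.card_pos
  cases k with
  | zero => simp only [pow_zero, mul_one, Finset.sum_const, nsmul_eq_mul, le_refl]
  | succ k =>
    refine le_of_mul_le_mul_left ?_ (pow_pos hcard k)
    calc (s.card : ℝ) ^ k * (s.card * a ^ (k + 1)) = (s.card * a) ^ (k + 1) := by ring
      _ ≤ (∑ i ∈ s, f i) ^ (k + 1) := by gcongr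
      _ ≤ (s.card : ℝ) ^ k * ∑ i ∈ s, f i ^ (k + 1) := pow_sum_le_card_mul_sum_pow hf k

theorem two_mul_natCard_edges_le_sum_card_adj {β : Type*} [Finite β] (G : SimpleGraph β)
    (X : Finset β) : 2 * Nat.card {e : Sym2 β // e ∈ G.edgeSet ∧ ∀ v ∈ e, v ∈ X} ≤
      ∑ v ∈ X, (X.filter (G.Adj v)).card := by
  have : Fintype β := Fintype.ofFinite β
  rw [Nat.card_eq_fintype_card, Fintype.card_subtype, ← Finset.card_sigma]
  refine Finset.mul_card_image_le_card_of_maps_to (f := fun p : (_ : β) × β => s(p.1, p.2))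
    (fun p hp => ?_) _ fun e => e.inductionOn fun a b he => ?_
  · obtain ⟨hp1, hp2, hadj⟩ : p.1 ∈ X ∧ p.2 ∈ X ∧ G.Adj p.1 p.2 := by
      simpa only [Finset.mem_sigma, Finset.mem_filter] using hp
    simp only [Finset.mem_filter, Finset.mem_univ, true_and, SimpleGraph.mem_edgeSet,
      Sym2.mem_iff, forall_eq_or_imp, forall_eq]
    exact ⟨hadj, hp1, hp2⟩
  · obtain ⟨hadj, ha, hb⟩ : G.Adj a b ∧ a ∈ X ∧ b ∈ X := by
      simpa only [Finset.mem_filter, Finset.mem_univ, true_and, SimpleGraph.mem_edgeSet,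
        Sym2.mem_iff, forall_eq_or_imp, forall_eq] using he
    have hne : (⟨a, b⟩ : (_ : β) × β) ≠ ⟨b, a⟩ := fun h => hadj.ne (congrArg Sigma.fst h)
    rw [← Finset.card_pair hne]
    refine Finset.card_le_card (Finset.insert_subset ?_ (Finset.singleton_subset_iff.2 ?_))
    · simp only [Finset.mem_filter, Finset.mem_sigma, ha, hb, hadj, and_self]
    · simp only [Finset.mem_filter, Finset.mem_sigma, ha, hb, hadj.symm, Sym2.eq_swap, and_self]

variable {β : Type*} [Fintype β] {G : SimpleGraph β} {ρ d : ℝ}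

theorem LocallyDense.card_mul_le_sum_card_adj (hG : LocallyDense G ρ d) {X : Finset β}
    (hX : ρ * (Fintype.card β : ℝ) ≤ X.card) :
    X.card * (d * X.card) ≤ ∑ v ∈ X, ((X.filter (G.Adj v)).card : ℝ) := by
  have hdeg : (2 : ℝ) * Nat.card {e : Sym2 β // e ∈ G.edgeSet ∧ ∀ v ∈ e, v ∈ X} ≤
      ∑ v ∈ X, ((X.filter (G.Adj v)).card : ℝ) :=
    mod_cast two_mul_natCard_edges_le_sum_card_adj G X
  linarith [hG X hX]

theorem sum_card_orderedCliques_adj_le (G : SimpleGraph β) (r : ℕ) (X : Finset β) :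
    ∑ v ∈ X, (orderedCliques G r (X.filter (G.Adj v))).card ≤
      (orderedCliques G (r + 1) X).card := by
  rw [← Finset.card_sigma]
  refine Finset.card_le_card_of_injOn (fun p => (Fin.cons p.1 p.2 : Fin (r + 1) → β)) ?_ ?_
  · rintro ⟨v, f⟩ hvf
    obtain ⟨hv, hf⟩ := Finset.mem_sigma.1 hvf
    obtain ⟨hfX, hadj⟩ := mem_orderedCliques.1 hf
    refine mem_orderedCliques.2 ⟨Fin.cases hv fun i => (Finset.mem_filter.1 (hfX i)).1, ?_⟩
    refine Fin.cases (Fin.cases (absurd rfl) fun j _ => ?_) fun i => Fin.cases (fun _ => ?_)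
      fun j hij => hadj fun h => hij (congrArg Fin.succ h)
    · exact (Finset.mem_filter.1 (hfX j)).2
    · exact (Finset.mem_filter.1 (hfX i)).2.symm
  · rintro ⟨v, f⟩ - ⟨w, g⟩ - hvw
    obtain ⟨rfl, rfl⟩ := Fin.cons_inj.1 hvw
    rfl

theorem card_orderedCliques_zero (G : SimpleGraph β) (X : Finset β) :
    (orderedCliques G 0 X).card = 1 :=
  Finset.card_eq_one.2 ⟨Fin.elim0, Finset.eq_singleton_iff_unique_mem.2
    ⟨mem_orderedCliques.2 ⟨fun i => i.elim0, fun i => i.elim0⟩, fun _ _ => Subsingleton.elim _ _⟩⟩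

theorem LocallyDense.le_card_orderedCliques_succ (hG : LocallyDense G ρ d) (hd : 0 ≤ d)
    {X : Finset β} (hX : ρ * (Fintype.card β : ℝ) ≤ X.card) {k : ℕ} {a b : ℝ} (ha : 0 ≤ a)
    (h : ∀ Y : Finset β, a * (Y.card : ℝ) ^ k - b ≤ (orderedCliques G k Y).card) :
    d ^ k * a * (X.card : ℝ) ^ (k + 1) - X.card * b ≤ (orderedCliques G (k + 1) X).card := by
  have hpow : X.card * (d * X.card) ^ k ≤ ∑ v ∈ X, ((X.filter (G.Adj v)).card : ℝ) ^ k :=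
    card_mul_pow_le_sum_pow (by positivity) (fun _ _ => Nat.cast_nonneg _)
      (hG.card_mul_le_sum_card_adj hX) k
  calc d ^ k * a * (X.card : ℝ) ^ (k + 1) - X.card * b
      = a * (X.card * (d * X.card) ^ k) - X.card * b := by ring
    _ ≤ a * ∑ v ∈ X, ((X.filter (G.Adj v)).card : ℝ) ^ k - X.card * b := by gcongr
    _ = ∑ v ∈ X, (a * ((X.filter (G.Adj v)).card : ℝ) ^ k - b) := by
        rw [Finset.sum_sub_distrib, Finset.mul_sum, Finset.sum_const, nsmul_eq_mul]
    _ ≤ ∑ v ∈ X, ((orderedCliques G k (X.filter (G.Adj v))).card : ℝ) :=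
        Finset.sum_le_sum fun v _ => h _
    _ ≤ (orderedCliques G (k + 1) X).card := mod_cast sum_card_orderedCliques_adj_le G k X

theorem LocallyDense.le_card_orderedCliques (hG : LocallyDense G ρ d) (hρ : 0 ≤ ρ) (hd : 0 ≤ d)
    (hd1 : d ≤ 1) (k : ℕ) (X : Finset β) :
    d ^ k.choose 2 * (X.card : ℝ) ^ k - ρ * (Fintype.card β : ℝ) ^ k ≤
      (orderedCliques G k X).card := by
  set N : ℝ := (Fintype.card β : ℝ)
  have hXN (X : Finset β) : (X.card : ℝ) ≤ N := Nat.cast_le.2 X.card_le_univ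
  induction k generalizing X with
  | zero =>
    rw [card_orderedCliques_zero, Nat.choose_zero_succ]
    simp only [pow_zero, mul_one, Nat.cast_one, sub_le_self_iff, hρ]
  | succ k ih =>
    rcases le_or_gt (ρ * N) X.card with hX | hX
    · refine le_trans ?_ (hG.le_card_orderedCliques_succ hd hX (by positivity) ih)
      rw [Nat.choose_succ_succ', Nat.choose_one_right, pow_add d, pow_succ' N, mul_left_comm ρ]
      gcongr
      exact hXN X
    · refine (sub_nonpos.2 ?_).trans (Nat.cast_nonneg _)
      calc d ^ (k + 1).choose 2 * (X.card : ℝ) ^ (k + 1)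
          ≤ 1 * (X.card : ℝ) ^ (k + 1) := by
            gcongr
            exact pow_le_one₀ hd hd1
        _ = X.card * (X.card : ℝ) ^ k := by ring
        _ ≤ ρ * N * N ^ k := by
            gcongr
            exact hXN X
        _ = ρ * N ^ (k + 1) := by ring

theorem LocallyDense.le_homDensity_top [Nonempty β] (hG : LocallyDense G ρ d) (hρ : 0 ≤ ρ)
    (hd : 0 ≤ d) (hd1 : d ≤ 1) (k : ℕ) :
    d ^ k.choose 2 - ρ ≤ homDensity (⊤ : SimpleGraph (Fin k)) G := by
  have h := hG.le_card_orderedCliques hρ hd hd1 k Finset.univ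
  rw [Finset.card_univ, ← sub_mul] at h
  rwa [homDensity, natCard_hom_top, Fintype.card_fin, le_div_iff₀ (by positivity)]

end LocallyDenseGraphs

theorem pow_sub_mul_le_pow {x a ρ : ℝ} (hx : 0 ≤ x) (hx1 : x ≤ 1) (ha : 0 ≤ a) (ha1 : a ≤ 1)
    (hρ : 0 ≤ ρ) (h : a - ρ ≤ x) (m : ℕ) : a ^ m - m * ρ ≤ x ^ m := by
  induction m with
  | zero => simp only [pow_zero, Nat.cast_zero, zero_mul, sub_zero, le_refl]
  | succ m ih =>
    calc a ^ (m + 1) - (m + 1 : ℕ) * ρ = (a - ρ) * a ^ m - 1 * (m * ρ) - ρ * (1 - a ^ m) := by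
          push_cast
          ring
      _ ≤ (a - ρ) * a ^ m - 1 * (m * ρ) :=
          sub_le_self _ (mul_nonneg hρ (sub_nonneg.2 (pow_le_one₀ ha ha1)))
      _ ≤ x * a ^ m - x * (m * ρ) := by gcongr
      _ = x * (a ^ m - m * ρ) := by ring
      _ ≤ x * x ^ m := mul_le_mul_of_nonneg_left ih hx
      _ = x ^ (m + 1) := (pow_succ' x m).symm

theorem stmt16_general {α : Type*} [Fintype α] [DecidableEq α] (H : SimpleGraph α) {η : ℝ}
    (hη : 0 < η) :
    ∃ ρ : ℝ, 0 < ρ ∧ ∀ d : ℝ, 0 ≤ d → d ≤ 1 → ∀ (β : Type*) [Fintype β] [Nonempty β]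
      (G : SimpleGraph β), LocallyDense G ρ d →
        d ^ (treewidth H * (treewidth H + 1) / 2 * graphRank H) - η ≤ homDensity H G := by
  set t := treewidth H
  set r := graphRank H
  have hρ : 0 < η / (r + 1) := by positivity
  refine ⟨η / (r + 1), hρ, fun d hd hd1 β _ _ G hG => ?_⟩
  set τ := homDensity (⊤ : SimpleGraph (Fin (t + 1))) G
  have hτ : d ^ (t * (t + 1) / 2) - η / (r + 1) ≤ τ := by
    have h := hG.le_homDensity_top hρ.le hd hd1 (t + 1)
    rwa [Nat.choose_two_right, Nat.add_sub_cancel, mul_comm (t + 1)] at h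
  have herr : r * (η / (r + 1)) ≤ η := by
    rw [mul_div_left_comm]
    exact mul_le_of_le_one_right hη.le (div_le_one_of_le₀ (by linarith) (by positivity))
  calc d ^ (t * (t + 1) / 2 * r) - η ≤ (d ^ (t * (t + 1) / 2)) ^ r - r * (η / (r + 1)) := by
        rw [pow_mul]
        gcongr
    _ ≤ τ ^ r := pow_sub_mul_le_pow (homDensity_nonneg _ _) (homDensity_le_one _ _)
        (by positivity) (pow_le_one₀ hd hd1) hρ.le hτ r
    _ ≤ homDensity H G := (hasElimOrder_treewidth H).pow_graphRank_le_homDensity G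

theorem stmt16 {α : Type*} [Fintype α] [DecidableEq α] (H : SimpleGraph α)
    (m t : ℕ) (hm : edgeCount H = m) (ht : treewidth H = t)
    (η : ℝ) (hη : 0 < η) :
    ∃ (ρ : ℝ) (n₀ : ℕ), 0 < ρ ∧
      ∀ (d : ℝ), 0 < d → d ≤ 1 →
        ∀ (β : Type) [Fintype β] (G : SimpleGraph β),
          n₀ ≤ Fintype.card β → LocallyDense G ρ d →
            homDensity H G ≥ d ^ ((t * (t + 1) / 2 + 1) * m) - η := by
  subst hm ht
  obtain ⟨ρ, hρ, h⟩ := stmt16_general H hη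
  refine ⟨ρ, 1, hρ, fun d hd hd1 β _ G hβ hG => ?_⟩
  have : Nonempty β := Fintype.card_pos_iff.1 hβ
  refine (sub_le_sub_right (pow_le_pow_of_le_one hd.le hd1 ?_) η).trans (h d hd.le hd1 β G hG)
  exact Nat.mul_le_mul (Nat.le_succ _) (graphRank_le_edgeCount H)
end

section
/- Let ρ, d ∈ (0,1] and let G be a (ρ,d)-dense graph on n vertices. Let f: V(G) → [0,1] be a function with Σ_{v∈V(G)} f(v) ≥ ρn. Then Σ_{uv∈E(G)} f(u)f(v) ≥ (d/2)·(Σ_{v∈V(G)} f(v))² − n, where the sum on the left is over unordered edges uv of G. -/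
/-!
Moving weight between two fractional vertices of `f : V → [0, 1]` keeps `∑ f` fixed and perturbs the
edge weight `∑ f u * f v` concavely, because the only edge on which both endpoints change
contributes a nonpositive quadratic term. Hence one of the two extreme moves does not increase the
edge weight, and each of them makes a vertex integral (pipage rounding). Once at most one vertex is
fractional, rounding it up to `1` yields the indicator of a set of size at least `∑ f`, to which
density applies, and costs at most the degree of that vertex.
-/

open Finset

section Concave

theorem concaveOn_finset_sum {𝕜 E β ι : Type*} [Semiring 𝕜] [PartialOrder 𝕜] [AddCommMonoid E]
    [SMul 𝕜 E] [AddCommMonoid β] [PartialOrder β] [IsOrderedAddMonoid β] [Module 𝕜 β] {s : Set E}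
    (hs : Convex 𝕜 s) {t : Finset ι} {F : ι → E → β} (hF : ∀ i ∈ t, ConcaveOn 𝕜 s (F i)) :
    ConcaveOn 𝕜 s (∑ i ∈ t, F i) :=
  Finset.sum_induction F (ConcaveOn 𝕜 s) (fun _ _ => ConcaveOn.add) (concaveOn_const 0 hs) hF

theorem concaveOn_affine_mul_affine {𝕜 : Type*} [CommRing 𝕜] [LinearOrder 𝕜]
    [IsOrderedRing 𝕜] (a c : 𝕜) {b d : 𝕜} (hbd : b * d ≤ 0) :
    ConcaveOn 𝕜 Set.univ fun t => (a + t * b) * (c + t * d) := by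
  refine ⟨convex_univ, fun x _ y _ p q hp hq hpq => ?_⟩
  have hgap : (a + (p * x + q * y) * b) * (c + (p * x + q * y) * d)
      - (p * ((a + x * b) * (c + x * d)) + q * ((a + y * b) * (c + y * d)))
      = p * q * (x - y) ^ 2 * -(b * d) := by
    obtain rfl : q = 1 - p := by linear_combination hpq
    ring
  have hgap_nonneg : 0 ≤ p * q * (x - y) ^ 2 * -(b * d) :=
    mul_nonneg (mul_nonneg (mul_nonneg hp hq) (sq_nonneg _)) (neg_nonneg.2 hbd)
  simp only [smul_eq_mul]
  rwa [← sub_nonneg, hgap]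

end Concave

section FractionalVertices

variable {V 𝕜 : Type*} [Fintype V] [Zero 𝕜] [One 𝕜] [LinearOrder 𝕜]

/-- The vertices at which a `[0, 1]`-valued function is not yet rounded to `0` or `1`. -/
def fractionalVertices (f : V → 𝕜) : Finset V :=
  {v | f v ∈ Set.Ioo 0 1}

theorem mem_fractionalVertices {f : V → 𝕜} {v : V} :
    v ∈ fractionalVertices f ↔ 0 < f v ∧ f v < 1 := by
  simp [fractionalVertices]

end FractionalVertices

section Exchange

variable {V 𝕜 : Type*} [DecidableEq V] [Ring 𝕜]

/-- The function obtained from `f` by moving the weight `t` from `v` to `u`: the elementary move of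
pipage rounding. -/
def exchange (f : V → 𝕜) (u v : V) (t : 𝕜) : V → 𝕜 :=
  f + t • (Pi.single u 1 - Pi.single v 1)

/-- Concavity along every exchange direction: the condition on a functional `Q` under which pipage
rounding can be carried out without increasing `Q`. -/
def ExchangeConcave [PartialOrder 𝕜] (Q : (V → 𝕜) → 𝕜) : Prop :=
  ∀ (f : V → 𝕜) (u v : V), ConcaveOn 𝕜 Set.univ fun t => Q (exchange f u v t)

variable (f : V → 𝕜) {u v w : V} (t : 𝕜)

theorem exchange_apply : exchange f u v t w =
    f w + t * ((Pi.single u 1 : V → 𝕜) w - (Pi.single v 1 : V → 𝕜) w) :=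
  rfl

theorem exchange_apply_left (huv : u ≠ v) : exchange f u v t u = f u + t := by
  simp [exchange_apply, huv]

theorem exchange_apply_right (huv : u ≠ v) : exchange f u v t v = f v - t := by
  simp [exchange_apply, huv.symm, sub_eq_add_neg]

theorem exchange_apply_of_ne (hwu : w ≠ u) (hwv : w ≠ v) : exchange f u v t w = f w := by
  simp [exchange_apply, hwu, hwv]

theorem exchange_zero : exchange f u v 0 = f := by
  simp [exchange]

theorem exchange_neg : exchange f u v (-t) = exchange f v u t := by
  rw [exchange, exchange, neg_smul, ← smul_neg, neg_sub]

theorem sum_exchange [Fintype V] : ∑ w, exchange f u v t w = ∑ w, f w := by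
  simp [exchange_apply, sum_add_distrib, ← mul_sum]

theorem single_sub_single_mul_nonpos [LinearOrder 𝕜] [IsOrderedRing 𝕜] {x y : V}
    (hxy : x ≠ y) :
    (Pi.single u 1 - Pi.single v 1 : V → 𝕜) x * (Pi.single u 1 - Pi.single v 1 : V → 𝕜) y ≤ 0 := by
  simp only [Pi.sub_apply, Pi.single_apply]
  split_ifs <;> simp_all

end Exchange

section PipageRounding

variable {V 𝕜 : Type*} [DecidableEq V] [Field 𝕜] [LinearOrder 𝕜] [IsStrictOrderedRing 𝕜]
  {f : V → 𝕜} {u v : V}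

theorem exchange_min_mem_Icc (hf : ∀ w, f w ∈ Set.Icc 0 1) (huv : u ≠ v) (w : V) :
    exchange f u v (min (1 - f u) (f v)) w ∈ Set.Icc 0 1 := by
  have ht_nonneg : 0 ≤ min (1 - f u) (f v) := le_min (sub_nonneg.2 (hf u).2) (hf v).1
  have ht_le_left := min_le_left (1 - f u) (f v)
  have ht_le_right := min_le_right (1 - f u) (f v)
  obtain rfl | hwu := eq_or_ne w u
  · rw [exchange_apply_left f _ huv]
    exact ⟨add_nonneg (hf w).1 ht_nonneg, by linarith⟩
  obtain rfl | hwv := eq_or_ne w v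
  · rw [exchange_apply_right f _ huv]
    exact ⟨sub_nonneg.2 ht_le_right, (sub_le_self _ ht_nonneg).trans (hf w).2⟩
  · rw [exchange_apply_of_ne f _ hwu hwv]
    exact hf w

variable [Fintype V]

theorem fractionalVertices_exchange_min_ssubset (hu : u ∈ fractionalVertices f)
    (hv : v ∈ fractionalVertices f) (huv : u ≠ v) :
    fractionalVertices (exchange f u v (min (1 - f u) (f v))) ⊂ fractionalVertices f := by
  rw [ssubset_iff_of_subset]
  · obtain ht | ht := min_choice (1 - f u) (f v)
    · refine ⟨u, hu, ?_⟩
      simp [mem_fractionalVertices, exchange_apply_left f _ huv, ht]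
    · refine ⟨v, hv, ?_⟩
      simp [mem_fractionalVertices, exchange_apply_right f _ huv, ht]
  · intro w hw
    obtain rfl | hwu := eq_or_ne w u
    · exact hu
    obtain rfl | hwv := eq_or_ne w v
    · exact hv
    rwa [mem_fractionalVertices, exchange_apply_of_ne f _ hwu hwv, ← mem_fractionalVertices] at hw

theorem ExchangeConcave.exists_fractionalVertices_ssubset {Q : (V → 𝕜) → 𝕜}
    (hQ : ExchangeConcave Q) (hf : ∀ w, f w ∈ Set.Icc 0 1)
    (hcard : 1 < #(fractionalVertices f)) :
    ∃ g : V → 𝕜, (∀ w, g w ∈ Set.Icc 0 1) ∧ ∑ w, g w = ∑ w, f w ∧ Q g ≤ Q f ∧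
      fractionalVertices g ⊂ fractionalVertices f := by
  obtain ⟨u, hu, v, hv, huv⟩ := one_lt_card.1 hcard
  set tu := min (1 - f u) (f v)
  set tv := min (1 - f v) (f u)
  have hzero : (0 : 𝕜) ∈ Set.Icc (-tv) tu :=
    ⟨neg_nonpos.2 (le_min (sub_nonneg.2 (hf v).2) (hf u).1),
      le_min (sub_nonneg.2 (hf u).2) (hf v).1⟩
  have hmin : min (Q (exchange f v u tv)) (Q (exchange f u v tu)) ≤ Q f := by
    simpa only [exchange_neg, exchange_zero] using
      (hQ f u v).min_le_of_mem_Icc (Set.mem_univ _) (Set.mem_univ _) hzero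
  obtain hle | hle := min_le_iff.1 hmin
  · exact ⟨_, exchange_min_mem_Icc hf huv.symm, sum_exchange f _, hle,
      fractionalVertices_exchange_min_ssubset hv hu huv.symm⟩
  · exact ⟨_, exchange_min_mem_Icc hf huv, sum_exchange f _, hle,
      fractionalVertices_exchange_min_ssubset hu hv huv⟩

theorem ExchangeConcave.exists_card_fractionalVertices_le_one {Q : (V → 𝕜) → 𝕜}
    (hQ : ExchangeConcave Q) (hf : ∀ w, f w ∈ Set.Icc 0 1) :
    ∃ g : V → 𝕜, (∀ w, g w ∈ Set.Icc 0 1) ∧ ∑ w, g w = ∑ w, f w ∧ Q g ≤ Q f ∧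
      #(fractionalVertices g) ≤ 1 := by
  induction hS : fractionalVertices f using Finset.strongInduction generalizing f with
  | H S ih =>
    subst hS
    obtain hcard | hcard := le_or_gt #(fractionalVertices f) 1
    · exact ⟨f, hf, rfl, le_rfl, hcard⟩
    · obtain ⟨f', hf', hsum', hQ', hlt⟩ := hQ.exists_fractionalVertices_ssubset hf hcard
      obtain ⟨g, hg, hsum, hQg, hcard_g⟩ := ih _ hlt hf' rfl
      exact ⟨g, hg, hsum.trans hsum', hQg.trans hQ', hcard_g⟩

end PipageRounding

section EdgeWeight

variable {V R : Type*} (G : SimpleGraph V) [Fintype G.edgeSet]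

/-- The total weight of the edges of `G` when the edge `uv` has weight `f u * f v`; it extends the
number of edges spanned by a vertex set to weighted vertex sets. -/
def edgeWeight [CommSemiring R] (f : V → R) : R :=
  ∑ e ∈ G.edgeFinset, Sym2.lift ⟨fun u v => f u * f v, fun u v => mul_comm (f u) (f v)⟩ e

theorem edgeWeight_indicator [CommSemiring R] (X : Finset V) :
    edgeWeight G ((X : Set V).indicator (1 : V → R)) =
      Nat.card {e : Sym2 V // e ∈ G.edgeSet ∧ ∀ v ∈ e, v ∈ X} := by
  classical
  have hedge (e : Sym2 V) :
      Sym2.lift ⟨fun u v => (X : Set V).indicator (1 : V → R) u * (X : Set V).indicator 1 v,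
        fun _ _ => mul_comm _ _⟩ e = if ∀ v ∈ e, v ∈ X then 1 else 0 := by
    induction e with
    | h x y => by_cases hx : x ∈ X <;> by_cases hy : y ∈ X <;> simp [hx, hy]
  have hcard : Nat.card {e : Sym2 V // e ∈ G.edgeSet ∧ ∀ v ∈ e, v ∈ X} =
      #{e ∈ G.edgeFinset | ∀ v ∈ e, v ∈ X} :=
    Nat.subtype_card _ (by simp)
  rw [edgeWeight, sum_congr rfl fun e _ => hedge e, sum_boole, hcard]

theorem exchangeConcave_edgeWeight [DecidableEq V] [CommRing R] [LinearOrder R]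
    [IsOrderedRing R] : ExchangeConcave (edgeWeight G : (V → R) → R) := by
  intro f u v
  have hedge : ∀ e ∈ G.edgeFinset, ConcaveOn R Set.univ fun t => Sym2.lift
      ⟨fun x y => exchange f u v t x * exchange f u v t y, fun _ _ => mul_comm _ _⟩ e := by
    intro e he
    induction e with
    | h x y =>
      have hxy : x ≠ y := (SimpleGraph.mem_edgeFinset.1 he : G.Adj x y).ne
      exact concaveOn_affine_mul_affine (f x) (f y) (single_sub_single_mul_nonpos hxy)
  simpa only [edgeWeight, sum_fn] using concaveOn_finset_sum convex_univ hedge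

variable [G.LocallyFinite]

theorem edgeWeight_le_add_sum_degree [CommSemiring R] [PartialOrder R] [IsOrderedRing R]
    {f g : V → R} (hf : ∀ v, 0 ≤ f v) (hg : ∀ v, g v ∈ Set.Icc 0 1) {S : Finset V}
    (hfg : ∀ v ∉ S, g v = f v) :
    edgeWeight G g ≤ edgeWeight G f + ∑ v ∈ S, (G.degree v : R) := by
  classical
  have hcount : ∑ e ∈ G.edgeFinset, #{v ∈ S | v ∈ e} = ∑ v ∈ S, G.degree v := by
    simp_rw [← G.card_incidenceFinset_eq_degree, G.incidenceFinset_eq_filter]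
    exact (sum_card_bipartiteAbove_eq_sum_card_bipartiteBelow (fun v e => v ∈ e)).symm
  rw [← Nat.cast_sum, ← hcount, Nat.cast_sum, edgeWeight, edgeWeight, ← sum_add_distrib]
  refine sum_le_sum fun e _ => ?_
  obtain hS | hS := {v ∈ S | v ∈ e}.eq_empty_or_nonempty
  · have hoff : ∀ v ∈ e, g v = f v := fun v hve => hfg v fun hvS => filter_eq_empty_iff.1 hS hvS hve
    induction e with
    | h x y =>
      rw [hS]
      simp [hoff x, hoff y]
  · have hcard : (1 : R) ≤ #{v ∈ S | v ∈ e} := mod_cast Nat.mono_cast (α := R) hS.card_pos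
    induction e with
    | h x y =>
      have hg_le : g x * g y ≤ 1 := mul_le_one₀ (hg x).2 (hg y).1 (hg y).2
      exact (hg_le.trans hcard).trans (le_add_of_nonneg_left (mul_nonneg (hf x) (hf y)))

variable {G} in
theorem LocallyDense.sq_sum_le_edgeWeight_add_sum_degree [Fintype V] {ρ d : ℝ}
    (hG : LocallyDense G ρ d) (hd : 0 ≤ d) {f : V → ℝ} (hf : ∀ v, f v ∈ Set.Icc 0 1)
    (hsum : ρ * Fintype.card V ≤ ∑ v, f v) :
    d / 2 * (∑ v, f v) ^ 2 ≤ edgeWeight G f + ∑ v ∈ fractionalVertices f, (G.degree v : ℝ) := by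
  set X : Finset V := {v | f v ≠ 0} with hX
  have hsum_le : ∑ v, f v ≤ #X := by
    rw [hX, ← sum_filter_ne_zero]
    simpa using sum_le_card_nsmul X f 1 fun v _ => (hf v).2
  have hround : ∀ v ∉ fractionalVertices f, (X : Set V).indicator 1 v = f v := by
    intro v hv
    rw [mem_fractionalVertices] at hv
    obtain hzero | hne := eq_or_ne (f v) 0
    · simp [hX, hzero]
    · have hone : f v = 1 :=
        (hf v).2.eq_of_not_lt fun hlt => hv ⟨(hf v).1.lt_of_ne' hne, hlt⟩
      simp [hX, hone]
  have hindicator (v : V) : (X : Set V).indicator (1 : V → ℝ) v ∈ Set.Icc 0 1 :=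
    ⟨Set.indicator_nonneg (fun _ _ => zero_le_one) v,
      Set.indicator_le_self' (fun _ _ => zero_le_one) v⟩
  have hsum_nonneg : 0 ≤ ∑ v, f v := sum_nonneg fun v _ => (hf v).1
  calc d / 2 * (∑ v, f v) ^ 2 ≤ d / 2 * (#X : ℝ) ^ 2 := by gcongr
    _ ≤ edgeWeight G ((X : Set V).indicator 1) :=
      (hG X (hsum.trans hsum_le)).trans_eq (edgeWeight_indicator G X).symm
    _ ≤ edgeWeight G f + ∑ v ∈ fractionalVertices f, (G.degree v : ℝ) :=
      edgeWeight_le_add_sum_degree G (fun v => (hf v).1) hindicator hround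

end EdgeWeight

theorem stmt17 {β : Type*} [Fintype β] [DecidableEq β]
    (G : SimpleGraph β) [DecidableRel G.Adj] (ρ d : ℝ)
    (hρ : 0 < ρ) (hρ1 : ρ ≤ 1) (hd : 0 < d) (hd1 : d ≤ 1)
    (hG : LocallyDense G ρ d)
    (f : β → ℝ) (hf0 : ∀ v, 0 ≤ f v) (hf1 : ∀ v, f v ≤ 1)
    (hsum : ρ * (Fintype.card β : ℝ) ≤ ∑ v, f v) :
    ∑ e ∈ G.edgeFinset,
        Sym2.lift ⟨fun u v => f u * f v, fun u v => mul_comm (f u) (f v)⟩ e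
      ≥ d / 2 * (∑ v, f v) ^ 2 - (Fintype.card β : ℝ) := by
  obtain ⟨g, hg, hsum_eq, hweight, hfrac⟩ :=
    (exchangeConcave_edgeWeight G).exists_card_fractionalVertices_le_one
      fun v => ⟨hf0 v, hf1 v⟩
  have hdegree : ∑ v ∈ fractionalVertices g, (G.degree v : ℝ) ≤ Fintype.card β := by
    calc ∑ v ∈ fractionalVertices g, (G.degree v : ℝ)
        ≤ #(fractionalVertices g) • (Fintype.card β : ℝ) :=
          sum_le_card_nsmul _ _ _ fun v _ => Nat.cast_le.2 (G.degree_lt_card_verts v).le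
      _ ≤ 1 • (Fintype.card β : ℝ) := nsmul_le_nsmul_left (Nat.cast_nonneg _) hfrac
      _ = Fintype.card β := one_nsmul _
  rw [ge_iff_le, sub_le_iff_le_add]
  calc d / 2 * (∑ v, f v) ^ 2 = d / 2 * (∑ v, g v) ^ 2 := by rw [hsum_eq]
    _ ≤ edgeWeight G g + ∑ v ∈ fractionalVertices g, (G.degree v : ℝ) :=
      hG.sq_sum_le_edgeWeight_add_sum_degree hd.le hg (hsum_eq ▸ hsum)
    _ ≤ edgeWeight G f + Fintype.card β := add_le_add hweight hdegree
end

section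
/- Every triangle-vertex tree is common. That is, if H admits a K₃-decomposition (F, T) with |X ∩ Y| = 1 for every edge XY of T, then for every ε > 0 there exists n₀ such that for all n ≥ n₀, every red/blue colouring of the edges of the complete graph K_n contains at least (2^{1−|E(H)|} − ε)·n^{|V(H)|} monochromatic homomorphic labelled copies of H (i.e., maps V(H) → V(K_n) sending every edge of H to a red edge, plus those sending every edge of H to a blue edge, counted together). -/
open MeasureTheory

/-- `(bag, T)` is a `J`-decomposition of `H`: a tree decomposition in which every
bag induces a copy of `J`, and for adjacent bags there is an isomorphism between the
induced copies of `J` fixing the intersection pointwise. -/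
def IsJDecomp {α ι γ : Type*} [DecidableEq α] (H : SimpleGraph α) (J : SimpleGraph γ)
    (bag : ι → Finset α) (T : SimpleGraph ι) : Prop :=
  IsTreeDecomp H bag T ∧
  (∀ X : ι, Nonempty (H.induce ↑(bag X) ≃g J)) ∧
  (∀ X Y : ι, T.Adj X Y → ∃ e : H.induce ↑(bag X) ≃g H.induce ↑(bag Y),
      ∀ (v : α) (h1 : v ∈ bag X) (h2 : v ∈ bag Y),
        ((e ⟨v, h1⟩ : ↑(bag Y)) : α) = v)

/-- `H` is `J`-decomposable. -/
def JDecomposable {α γ : Type*} [DecidableEq α] (H : SimpleGraph α) (J : SimpleGraph γ) : Prop :=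
  ∃ (ι : Type) (_ : Fintype ι) (bag : ι → Finset α) (T : SimpleGraph ι),
    IsJDecomp H J bag T

/-!
Let `H` be glued from `m` copies of `J` along single vertices, following a tree. The isomorphisms
between adjacent copies fold `H` onto `J`, so a homomorphism from `J` to `G` pulls back to one from
`H` to `G`. Glue the copies one at a time and claim, for every product weight on the vertices of the
part built so far, that its mean over homomorphisms is at least `t_J(G) ^ k`, with `k` the number
of copies, times its geometric mean over the pulled back homomorphisms. Summing out the new
vertices of the last copy multiplies the weight at the gluing vertex by a rooted count, whose
geometric mean is controlled by the inequality of arithmetic and geometric means. The constant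
weight yields `t_J(G) ^ m ≤ t_H(G)`. Convexity of `x ^ m`, applied to the two colour classes, then
transfers commonness from `J` to `H`, and the triangle is common by Goodman's theorem.
-/

section

open Filter Finset Topology
open scoped BigOperators

section Expectation

variable {α β V : Type*} [Fintype α] [DecidableEq α] [Fintype β] [DecidableEq β] [Fintype V]

theorem expect_funSplitAt (j : β) (F : (β → V) → ℝ) :
    𝔼 x : V, 𝔼 ψ : {i // i ≠ j} → V, F ((Equiv.funSplitAt j V).symm (x, ψ)) = 𝔼 ψ, F ψ := by
  rw [← expect_product', univ_product_univ]
  exact Fintype.expect_equiv (Equiv.funSplitAt j V).symm _ _ fun _ => rfl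

variable [Nonempty V]

theorem expect_expect_extend {e : β → α} (he : e.Injective) (F : (α → V) → ℝ) :
    𝔼 φ : α → V, 𝔼 ψ : β → V, F (Function.extend e ψ φ) = 𝔼 φ, F φ := by
  -- Exchanging the values of `φ` along `e` with `ψ` is an involution on the pairs `(φ, ψ)`.
  have exchange (p : (α → V) × (β → V)) :
      Function.extend e (p.1 ∘ e) (Function.extend e p.2 p.1) = p.1 := by
    ext a
    by_cases ha : ∃ b, e b = a
    · obtain ⟨b, rfl⟩ := ha
      rw [he.extend_apply, Function.comp_apply]
    · rw [Function.extend_apply' _ _ _ ha, Function.extend_apply' _ _ _ ha]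
  calc 𝔼 φ : α → V, 𝔼 ψ : β → V, F (Function.extend e ψ φ)
      = 𝔼 p : (α → V) × (β → V), F (Function.extend e p.2 p.1) :=
        (expect_product univ univ fun p => F (Function.extend e p.2 p.1)).symm
    _ = 𝔼 p : (α → V) × (β → V), F p.1 := by
        refine expect_nbij' (fun p => (Function.extend e p.2 p.1, p.1 ∘ e))
          (fun p => (Function.extend e p.2 p.1, p.1 ∘ e)) ?_ ?_ ?_ ?_ ?_ <;>
          simp [exchange, Function.extend_comp he]
    _ = 𝔼 φ, F φ := by
        rw [← univ_product_univ, expect_product]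
        simp only [Fintype.expect_const]

theorem expect_comp_injective {e : β → α} (he : e.Injective) (F : (β → V) → ℝ) :
    𝔼 φ : α → V, F (φ ∘ e) = 𝔼 ψ, F ψ := by
  rw [← expect_expect_extend he]
  simp only [Function.extend_comp he, Fintype.expect_const]

end Expectation

section GeomMean

/-- The geometric mean of `h` over the finite set `P`, the average through which weights are
compared with means; it is `1` when `P` is empty. -/
noncomputable def geomMean {Ω : Type*} (P : Finset Ω) (h : Ω → ℝ) : ℝ :=
  ∏ ω ∈ P, h ω ^ (#P : ℝ)⁻¹

variable {Ω : Type*} {P : Finset Ω} {h k : Ω → ℝ}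

theorem geomMean_nonneg (hh : ∀ ω ∈ P, 0 ≤ h ω) : 0 ≤ geomMean P h :=
  prod_nonneg fun ω hω => Real.rpow_nonneg (hh ω hω) _

theorem geomMean_congr (hhk : ∀ ω ∈ P, h ω = k ω) : geomMean P h = geomMean P k :=
  prod_congr rfl fun ω hω => by rw [hhk ω hω]

theorem geomMean_one (P : Finset Ω) : geomMean P (fun _ => 1) = 1 := by
  simp only [geomMean, Real.one_rpow, prod_const_one]

theorem geomMean_mul (hh : ∀ ω ∈ P, 0 ≤ h ω) (hk : ∀ ω ∈ P, 0 ≤ k ω) :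
    geomMean P (fun ω => h ω * k ω) = geomMean P h * geomMean P k := by
  simp only [geomMean, ← prod_mul_distrib]
  exact prod_congr rfl fun ω hω => Real.mul_rpow (hh ω hω) (hk ω hω)

theorem geomMean_le_expect (hP : P.Nonempty) (hh : ∀ ω ∈ P, 0 ≤ h ω) :
    geomMean P h ≤ 𝔼 ω ∈ P, h ω := by
  have hcard : (#P : ℝ) ≠ 0 := Nat.cast_ne_zero.2 hP.card_ne_zero
  have amgm := Real.geom_mean_le_arith_mean_weighted P (fun _ => (#P : ℝ)⁻¹) h
    (fun _ _ => by positivity) (by simp [hcard]) hh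
  rwa [← mul_sum, inv_mul_eq_div, ← expect_eq_sum_div_card] at amgm

theorem dens_mul_geomMean_le_expect [Fintype Ω] [DecidableEq Ω] (hh : ∀ ω ∈ P, 0 ≤ h ω) :
    P.dens * geomMean P h ≤ 𝔼 ω, if ω ∈ P then h ω else 0 := by
  rw [Fintype.expect_ite_mem, NNRat.smul_def]
  obtain rfl | hP := P.eq_empty_or_nonempty
  · simp
  · exact mul_le_mul_of_nonneg_left (geomMean_le_expect hP hh) (by positivity)

end GeomMean

section RootedMean

variable {γ V : Type*} [Fintype γ] [DecidableEq γ] [Fintype V] [DecidableEq V]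

/-- The mean weight of the members of `P` rooted at `x`: fix the value `x` at `j`, choose the other
values at random, and weigh the members of `P` by the product of the `g i` over `i ≠ j`. -/
noncomputable def rootedMean (P : Finset (γ → V)) (j : γ) (g : γ → V → ℝ) (x : V) : ℝ :=
  𝔼 ψ : {i // i ≠ j} → V,
    if (Equiv.funSplitAt j V).symm (x, ψ) ∈ P then ∏ i : {i // i ≠ j}, g i (ψ i) else 0

variable {P : Finset (γ → V)} {j : γ} {g : γ → V → ℝ}

theorem rootedMean_nonneg (hg : ∀ i x, 0 ≤ g i x) (x : V) : 0 ≤ rootedMean P j g x :=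
  expect_nonneg fun ψ _ => by
    split_ifs
    exacts [prod_nonneg fun i _ => hg i (ψ i), le_rfl]

theorem prod_eq_zero_of_rootedMean_eq_zero (hg : ∀ i x, 0 ≤ g i x) {ψ : γ → V} (hψ : ψ ∈ P)
    (h : rootedMean P j g (ψ j) = 0) : ∏ i : {i // i ≠ j}, g i (ψ i) = 0 := by
  have vanish := (expect_eq_zero_iff_of_nonneg (fun χ _ => by
    split_ifs
    exacts [prod_nonneg fun i _ => hg i (χ i), le_rfl])).1 h (fun i => ψ i) (mem_univ _)
  have split : (Equiv.funSplitAt j V).symm (ψ j, fun i => ψ i) = ψ :=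
    (Equiv.funSplitAt j V).symm_apply_apply ψ
  rwa [split, if_pos hψ] at vanish

variable [Nonempty V]

theorem expect_mul_inv_rootedMean_le_one :
    (𝔼 ψ, if ψ ∈ P then (∏ i : {i // i ≠ j}, g i (ψ i)) * (rootedMean P j g (ψ j))⁻¹ else 0) ≤
      1 := by
  rw [← expect_funSplitAt j]
  refine expect_le univ_nonempty fun x _ => ?_
  calc _ = rootedMean P j g x * (rootedMean P j g x)⁻¹ := by
        rw [rootedMean, expect_mul]
        refine expect_congr rfl fun ψ _ => ?_
        simp only [ite_mul, zero_mul, Equiv.funSplitAt_symm_apply, dif_pos, rootedMean]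
        congr! 4 with _ i
        rw [dif_neg i.2]
    _ ≤ 1 := mul_inv_le_one

/-- Dividing the weight by its rooted mean yields a weight of total mean at most one, to which the
inequality of arithmetic and geometric means applies. -/
theorem dens_mul_geomMean_le_geomMean_rootedMean (hg : ∀ i x, 0 ≤ g i x) :
    P.dens * geomMean P (fun ψ => ∏ i : {i // i ≠ j}, g i (ψ i)) ≤
      geomMean P fun ψ => rootedMean P j g (ψ j) := by
  set N : (γ → V) → ℝ := fun ψ => ∏ i : {i // i ≠ j}, g i (ψ i)
  set R : (γ → V) → ℝ := fun ψ => rootedMean P j g (ψ j)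
  have hN (ψ) : 0 ≤ N ψ := prod_nonneg fun i _ => hg i (ψ i)
  have hR (ψ) : 0 ≤ R ψ := rootedMean_nonneg hg (ψ j)
  have hNR (ψ) : 0 ≤ N ψ * (R ψ)⁻¹ := mul_nonneg (hN ψ) (inv_nonneg.2 (hR ψ))
  have factor : geomMean P N = geomMean P (fun ψ => N ψ * (R ψ)⁻¹) * geomMean P R := by
    rw [← geomMean_mul (fun ψ _ => hNR ψ) fun ψ _ => hR ψ]
    refine geomMean_congr fun ψ hψ => ?_
    by_cases h : R ψ = 0
    · rw [h, mul_zero]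
      exact prod_eq_zero_of_rootedMean_eq_zero hg hψ h
    · rw [inv_mul_cancel_right₀ h]
  calc P.dens * geomMean P N
      = P.dens * geomMean P (fun ψ => N ψ * (R ψ)⁻¹) * geomMean P R := by rw [factor, mul_assoc]
    _ ≤ 1 * geomMean P R := by
        gcongr
        · exact geomMean_nonneg fun ψ _ => hR ψ
        · exact (dens_mul_geomMean_le_expect fun ψ _ => hNR ψ).trans
            expect_mul_inv_rootedMean_le_one
    _ = geomMean P R := one_mul _

end RootedMean

section GeomMeanBound

theorem prod_union_image_univ {M α γ : Type*} [CommMonoid M] [DecidableEq α] [Fintype γ]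
    [DecidableEq γ] {A : Finset α} {e : γ → α} {j : γ} (he : e.Injective) (hj : e j ∈ A)
    (hA : ∀ i ≠ j, e i ∉ A) (f : α → M) :
    ∏ v ∈ A ∪ univ.image e, f v = (∏ v ∈ A, f v) * ∏ i : {i // i ≠ j}, f (e i) := by
  have hunion : A ∪ univ.image e = A ∪ univ.image fun i : {i // i ≠ j} => e i := by
    ext v
    simp only [mem_union, mem_image, mem_univ, true_and, Subtype.exists]
    grind
  rw [hunion, prod_union, prod_image fun i _ k _ h => Subtype.ext (he h)]
  refine disjoint_right.2 ?_
  simp only [mem_image]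
  rintro _ ⟨i, -, rfl⟩
  exact hA i i.2

variable {α γ V : Type*} [Fintype α] [DecidableEq α] [Fintype V]

section Glue

variable [Fintype γ] [DecidableEq γ] [DecidableEq V] [Nonempty V] {P : Finset (γ → V)}
  {e : γ → α} {j : γ} {A : Finset α} {F : (α → V) → ℝ}

theorem expect_mul_prod_union_image_univ (he : e.Injective) (hF : DependsOn F A) (hj : e j ∈ A)
    (hA : ∀ i ≠ j, e i ∉ A) (g : α → V → ℝ) :
    𝔼 φ, (if φ ∘ e ∈ P then 1 else 0) * F φ * ∏ v ∈ A ∪ univ.image e, g v (φ v) =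
      𝔼 φ, F φ * ((∏ v ∈ A, g v (φ v)) * rootedMean P j (fun i => g (e i)) (φ (e j))) := by
  set e' : {i // i ≠ j} → α := fun i => e i
  have he' : e'.Injective := he.comp Subtype.val_injective
  rw [← expect_expect_extend he']
  refine expect_congr rfl fun φ _ => ?_
  rw [rootedMean, mul_expect, mul_expect]
  refine expect_congr rfl fun ψ _ => ?_
  set χ := Function.extend e' ψ φ
  have hχA : ∀ v ∈ A, χ v = φ v := fun v hv => Function.extend_apply' _ _ _ fun ⟨i, hi⟩ =>
    hA i i.2 (by rwa [← hi] at hv)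
  have hχe (i : {i // i ≠ j}) : χ (e i) = ψ i := he'.extend_apply ψ φ i
  have hsplit : χ ∘ e = (Equiv.funSplitAt j V).symm (φ (e j), ψ) := by
    ext i
    rw [Equiv.funSplitAt_symm_apply, Function.comp_apply]
    split_ifs with hi
    · rw [hi, hχA _ hj]
    · exact hχe ⟨i, hi⟩
  rw [prod_union_image_univ he hj hA, hsplit, hF hχA, prod_congr rfl fun v hv => by rw [hχA v hv]]
  simp only [hχe]
  split_ifs <;> ring

end Glue

/-- The inductive counting statement: for every product weight on the coordinates in `A`, the mean
of `F` against the weight is at least `c` times the geometric mean of the weight over the functions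
`ψ ∘ π` with `ψ ∈ P`. -/
def GeomMeanBound (P : Finset (γ → V)) (π : α → γ) (A : Finset α) (c : ℝ)
    (F : (α → V) → ℝ) : Prop :=
  ∀ g : α → V → ℝ, (∀ v x, 0 ≤ g v x) →
    c * geomMean P (fun ψ => ∏ v ∈ A, g v (ψ (π v))) ≤ 𝔼 φ, F φ * ∏ v ∈ A, g v (φ v)

namespace GeomMeanBound

variable [Fintype γ] [DecidableEq γ] [DecidableEq V] [Nonempty V]
  {P : Finset (γ → V)} {π : α → γ} {e : γ → α}

theorem image_univ (hπe : Function.LeftInverse π e) :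
    GeomMeanBound P π (univ.image e) P.dens fun φ => if φ ∘ e ∈ P then 1 else 0 := by
  intro g hg
  have he : Set.InjOn e (univ : Finset γ) := hπe.injective.injOn
  simp only [prod_image he, hπe _, ite_mul, one_mul, zero_mul]
  calc P.dens * geomMean P (fun ψ => ∏ i, g (e i) (ψ i))
      ≤ 𝔼 ψ, if ψ ∈ P then ∏ i, g (e i) (ψ i) else 0 :=
        dens_mul_geomMean_le_expect fun ψ _ => prod_nonneg fun i _ => hg _ _
    _ = 𝔼 φ : α → V, if φ ∘ e ∈ P then ∏ i, g (e i) (φ (e i)) else 0 :=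
        (expect_comp_injective hπe.injective fun ψ =>
          if ψ ∈ P then ∏ i, g (e i) (ψ i) else 0).symm

variable {j : γ} {A : Finset α} {c : ℝ} {F : (α → V) → ℝ}

/-- Integrating out the new coordinates multiplies the weight at `e j` by a rooted mean. -/
theorem union_image_univ (h : GeomMeanBound P π A c F) (hc : 0 ≤ c) (hF : DependsOn F A)
    (hπe : Function.LeftInverse π e) (hj : e j ∈ A) (hA : ∀ i ≠ j, e i ∉ A) :
    GeomMeanBound P π (A ∪ univ.image e) (P.dens * c)
      fun φ => (if φ ∘ e ∈ P then 1 else 0) * F φ := by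
  intro g hg
  set R : V → ℝ := rootedMean P j fun i => g (e i)
  set g' : α → V → ℝ := fun v x => g v x * if v = e j then R x else 1
  have hR (x) : 0 ≤ R x := rootedMean_nonneg (fun i => hg (e i)) x
  have hprod (φ : α → V) : ∏ v ∈ A, g' v (φ v) = (∏ v ∈ A, g v (φ v)) * R (φ (e j)) := by
    rw [prod_mul_distrib, prod_ite_eq' A (e j), if_pos hj]
  have hnonneg (ψ : γ → V) : 0 ≤ ∏ v ∈ A, g v (ψ (π v)) := prod_nonneg fun v _ => hg v _
  have leaf := dens_mul_geomMean_le_geomMean_rootedMean (P := P) (j := j) fun i => hg (e i)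
  rw [expect_mul_prod_union_image_univ hπe.injective hF hj hA]
  simp only [prod_union_image_univ hπe.injective hj hA, hπe _]
  calc P.dens * c * geomMean P (fun ψ =>
          (∏ v ∈ A, g v (ψ (π v))) * ∏ i : {i // i ≠ j}, g (e i) (ψ i))
      = c * geomMean P (fun ψ => ∏ v ∈ A, g v (ψ (π v))) *
          (P.dens * geomMean P fun ψ => ∏ i : {i // i ≠ j}, g (e i) (ψ i)) := by
        rw [geomMean_mul (fun ψ _ => hnonneg ψ) fun ψ _ => prod_nonneg fun i _ => hg _ _]
        ring
    _ ≤ c * geomMean P (fun ψ => ∏ v ∈ A, g v (ψ (π v))) * geomMean P fun ψ => R (ψ j) :=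
        mul_le_mul_of_nonneg_left leaf (mul_nonneg hc (geomMean_nonneg fun ψ _ => hnonneg ψ))
    _ = c * geomMean P (fun ψ => ∏ v ∈ A, g' v (ψ (π v))) := by
        rw [mul_assoc, ← geomMean_mul (fun ψ _ => hnonneg ψ) fun ψ _ => hR _]
        congr! 3 with ψ
        simpa only [Function.comp_apply, hπe _] using (hprod (ψ ∘ π)).symm
    _ ≤ 𝔼 φ, F φ * ∏ v ∈ A, g' v (φ v) := h g' fun v x => by
        refine mul_nonneg (hg v x) ?_
        split_ifs
        exacts [hR x, zero_le_one]
    _ = _ := by simp only [hprod, R]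

end GeomMeanBound

end GeomMeanBound

section TreeDecomposition

theorem connected_finset_induction {ι : Type*} [Fintype ι] [DecidableEq ι] {T : SimpleGraph ι}
    (hT : T.Connected) {motive : Finset ι → Prop} (singleton : ∀ X, motive {X})
    (insert : ∀ (S : Finset ι) X Y, (T.induce (S : Set ι)).Connected → Y ∈ S → X ∉ S → T.Adj Y X →
      motive S → motive (insert X S)) : motive univ := by
  obtain ⟨X₀⟩ := hT.nonempty
  have start : (T.induce (({X₀} : Finset ι) : Set ι)).Connected ∧ motive {X₀} := by
    refine ⟨?_, singleton X₀⟩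
    rw [coe_singleton]
    exact .of_subsingleton
  obtain ⟨S, ⟨hconn, hS⟩, hmax⟩ :=
    (Set.toFinite {S : Finset ι | (T.induce (S : Set ι)).Connected ∧ motive S}).exists_maximal
      ⟨_, start⟩
  suffices S = univ by rwa [← this]
  by_contra hne
  obtain ⟨Z, hZ⟩ := not_forall.1 (mt eq_univ_iff_forall.2 hne)
  obtain ⟨Y₀, hY₀⟩ := hconn.nonempty
  obtain ⟨p⟩ := hT.preconnected Y₀ Z
  obtain ⟨d, -, hY, hX⟩ := p.exists_boundary_dart S hY₀ hZ
  have hconn' : (T.induce ((Insert.insert d.snd S : Finset ι) : Set ι)).Connected := by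
    rw [coe_insert, ← Set.union_singleton]
    exact SimpleGraph.connected_induce_union hconn.preconnected .of_subsingleton hY
      (Set.mem_singleton d.snd) d.adj
  exact hX (hmax ⟨hconn', insert S d.snd d.fst hconn hY hX d.adj hS⟩ (subset_insert _ _)
    (mem_insert_self _ _))

variable {α ι γ : Type*} [DecidableEq α] {H : SimpleGraph α} {J : SimpleGraph γ}
  {bag : ι → Finset α} {T : SimpleGraph ι}

theorem IsTreeDecomp.mem_bag_of_adj (h : IsTreeDecomp H bag T) {S : Finset ι} {X Y Z : ι}
    (hS : (T.induce (S : Set ι)).Connected) (hY : Y ∈ S) (hX : X ∉ S) (hadj : T.Adj Y X)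
    (hZ : Z ∈ S) {v : α} (hvX : v ∈ bag X) (hvZ : v ∈ bag Z) : v ∈ bag Y := by
  classical
  obtain ⟨q⟩ := hS.preconnected ⟨Y, hY⟩ ⟨Z, hZ⟩
  set p := q.bypass.map (SimpleGraph.Embedding.induce (S : Set ι)).toHom
  have hp : p.IsPath := q.bypass_isPath.map Subtype.val_injective
  have hpS : X ∉ p.support := by
    rw [SimpleGraph.Walk.support_map, List.mem_map]
    rintro ⟨W, -, rfl⟩
    exact hX W.2
  exact h.2.2.2 X Z Y (.cons hadj.symm p) (hp.cons hpS)
    (List.mem_cons_of_mem _ p.start_mem_support) (mem_inter.2 ⟨hvX, hvZ⟩)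

namespace IsJDecomp

/-- The isomorphisms between adjacent bags fix the intersections, so the copies of `J` can be
identified along `T` one bag at a time. -/
theorem exists_fold [Finite ι] (h : IsJDecomp H J bag T) :
    ∃ π : α → γ, ∀ X, ∃ f : H.induce ↑(bag X) ≃g J, ∀ v, f v = π v := by
  classical
  have := Fintype.ofFinite ι
  choose B hB using h.1.2.1
  have π₀ : α → γ := fun v => (h.2.1 (B v)).some ⟨v, hB v⟩
  suffices ∃ π : α → γ, ∀ X ∈ (univ : Finset ι), ∃ f : H.induce ↑(bag X) ≃g J, ∀ v, f v = π v by
    simpa only [mem_univ, true_imp_iff] using this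
  apply connected_finset_induction h.1.1.connected
    (motive := fun S => ∃ π : α → γ, ∀ X ∈ S, ∃ f : H.induce ↑(bag X) ≃g J, ∀ v, f v = π v)
  · intro X
    obtain ⟨f⟩ := h.2.1 X
    refine ⟨fun v => if hv : v ∈ bag X then f ⟨v, hv⟩ else π₀ v, fun Z hZ => ?_⟩
    obtain rfl := mem_singleton.1 hZ
    exact ⟨f, fun v => by simp⟩
  · rintro S X Y hS hY hX hadj ⟨π, hπ⟩
    obtain ⟨fY, hfY⟩ := hπ Y hY
    obtain ⟨f, hf⟩ := h.2.2 X Y hadj.symm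
    refine ⟨fun v => if hv : v ∈ bag X then fY (f ⟨v, hv⟩) else π v, fun Z hZ => ?_⟩
    obtain rfl | hZ := mem_insert.1 hZ
    · exact ⟨f.trans fY, fun v => by simp⟩
    obtain ⟨fZ, hfZ⟩ := hπ Z hZ
    refine ⟨fZ, fun v => (hfZ v).trans ?_⟩
    by_cases hvX : v.1 ∈ bag X
    · have hvY := h.1.mem_bag_of_adj hS hY hX hadj hZ hvX v.2
      rw [← hfY ⟨v, hvY⟩]
      simp only [dif_pos hvX]
      exact congrArg fY (Subtype.ext (hf v hvX hvY).symm)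
    · simp only [dif_neg hvX]

theorem exists_fold_embedding [Finite ι] (h : IsJDecomp H J bag T) :
    ∃ (π : α → γ) (e : ι → J ↪g H),
      ∀ X, Function.LeftInverse π (e X) ∧ Set.range (e X) = bag X := by
  obtain ⟨π, hπ⟩ := h.exists_fold
  choose f hf using hπ
  refine ⟨π, fun X => (SimpleGraph.Embedding.induce _).comp (f X).symm.toEmbedding,
    fun X => ⟨fun i => ?_, ?_⟩⟩
  · exact (hf X _).symm.trans ((f X).apply_symm_apply i)
  · ext v
    refine ⟨?_, fun hv => ⟨f X ⟨v, hv⟩, ?_⟩⟩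
    · rintro ⟨i, rfl⟩
      exact ((f X).symm i).2
    · exact congrArg Subtype.val ((f X).symm_apply_apply ⟨v, hv⟩)

end IsJDecomp

end TreeDecomposition

section HomFinset

open Classical in
/-- The homomorphisms from `J` to `G` as a finite set of functions, so that a random function can be
tested for being a homomorphism. -/
noncomputable def homFinset {γ V : Type*} [Fintype γ] [Fintype V]
    (J : SimpleGraph γ) (G : SimpleGraph V) : Finset (γ → V) :=
  {ψ | ∀ i j, J.Adj i j → G.Adj (ψ i) (ψ j)}

variable {γ V : Type*} [Fintype γ] [Fintype V] {J : SimpleGraph γ} {G : SimpleGraph V}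

theorem mem_homFinset {ψ : γ → V} :
    ψ ∈ homFinset J G ↔ ∀ i j, J.Adj i j → G.Adj (ψ i) (ψ j) := by
  simp only [homFinset, mem_filter, mem_univ, true_and]

theorem homDensity_eq_dens [DecidableEq γ] (J : SimpleGraph γ) (G : SimpleGraph V) :
    homDensity J G = (homFinset J G).dens := by
  have e : (J →g G) ≃ homFinset J G :=
    { toFun f := ⟨f, mem_homFinset.2 fun _ _ => f.map_adj⟩
      invFun ψ := ⟨ψ, fun {i j} => mem_homFinset.1 ψ.2 i j⟩ }
  rw [homDensity, Nat.card_congr e, Nat.card_eq_finsetCard, nnratCast_dens, Fintype.card_fun,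
    Nat.cast_pow]

theorem homDensity_eq_expect [DecidableEq γ] [DecidableEq V] (J : SimpleGraph γ)
    (G : SimpleGraph V) : homDensity J G = 𝔼 ψ, if ψ ∈ homFinset J G then 1 else 0 := by
  rw [homDensity_eq_dens, Fintype.expect_eq_sum_div_card, sum_boole, filter_mem_eq_inter,
    univ_inter, nnratCast_dens]

theorem homDensity_nonneg_s18 (J : SimpleGraph γ) (G : SimpleGraph V) : 0 ≤ homDensity J G := by
  unfold homDensity
  positivity

end HomFinset

section Counting

variable {α ι γ V : Type*} [Fintype α] [DecidableEq α] [Fintype γ] [Fintype V]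
  {H : SimpleGraph α} {J : SimpleGraph γ} {bag : ι → Finset α} {T : SimpleGraph ι}

namespace IsJDecomp

theorem mem_homFinset_iff (h : IsJDecomp H J bag T) {e : ι → J ↪g H}
    (he : ∀ X, Set.range (e X) = bag X) {G : SimpleGraph V} {φ : α → V} :
    φ ∈ homFinset H G ↔ ∀ X, φ ∘ e X ∈ homFinset J G := by
  simp only [mem_homFinset]
  refine ⟨fun hφ X i j hij => hφ _ _ ((e X).map_adj_iff.2 hij), fun hφ u v huv => ?_⟩
  obtain ⟨X, hu, hv⟩ := h.1.2.2.1 u v huv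
  rw [← mem_coe, ← he X] at hu hv
  obtain ⟨i, rfl⟩ := hu
  obtain ⟨j, rfl⟩ := hv
  exact hφ X i j ((e X).map_adj_iff.1 huv)

variable [Nonempty V]

theorem geomMeanBound [Fintype ι] [DecidableEq γ] [DecidableEq V] (h : IsJDecomp H J bag T)
    (hint : ∀ X Y, T.Adj X Y → #(bag X ∩ bag Y) = 1) {π : α → γ} {e : ι → J ↪g H}
    (hπe : ∀ X, Function.LeftInverse π (e X)) (he : ∀ X, Set.range (e X) = bag X)
    (P : Finset (γ → V)) :
    GeomMeanBound P π (univ.biUnion bag) (P.dens ^ Fintype.card ι)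
      fun φ => ∏ X, if φ ∘ e X ∈ P then 1 else 0 := by
  classical
  have himage (X) : univ.image (e X) = bag X := coe_injective (by simpa using he X)
  have hmem (X i) : e X i ∈ bag X := himage X ▸ mem_image_of_mem _ (mem_univ i)
  apply connected_finset_induction h.1.1.connected (motive := fun S =>
    GeomMeanBound P π (S.biUnion bag) (P.dens ^ #S) fun φ => ∏ X ∈ S, if φ ∘ e X ∈ P then 1 else 0)
  · intro X
    simpa only [singleton_biUnion, card_singleton, pow_one, prod_singleton, himage] using
      GeomMeanBound.image_univ (P := P) (hπe X)
  · intro S X Y hS hY hX hadj ih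
    obtain ⟨u, hu⟩ := card_eq_one.1 (hint X Y hadj.symm)
    have huXY : u ∈ bag X ∧ u ∈ bag Y := mem_inter.1 (hu ▸ mem_singleton_self u)
    obtain ⟨j, rfl⟩ : u ∈ Set.range (e X) := he X ▸ huXY.1
    have hnew : ∀ i ≠ j, e X i ∉ S.biUnion bag := by
      intro i hij hi
      obtain ⟨Z, hZ, hiZ⟩ := mem_biUnion.1 hi
      have hiY := h.1.mem_bag_of_adj hS hY hX hadj hZ (hmem X i) hiZ
      have hiu := mem_singleton.1 (hu ▸ mem_inter.2 ⟨hmem X i, hiY⟩)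
      exact hij ((e X).injective hiu)
    have hlocal : DependsOn (fun φ : α → V => ∏ X ∈ S, if φ ∘ e X ∈ P then (1 : ℝ) else 0)
        (S.biUnion bag) := fun φ χ hφχ => prod_congr rfl fun Z hZ => by
      rw [show φ ∘ e Z = χ ∘ e Z from
        funext fun i => hφχ _ (mem_biUnion.2 ⟨Z, hZ, hmem Z i⟩)]
    have glued := ih.union_image_univ (by positivity) hlocal (hπe X)
      (mem_biUnion.2 ⟨Y, hY, huXY.2⟩) hnew
    simpa only [biUnion_insert, union_comm, himage, card_insert_of_notMem hX, pow_succ',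
      prod_insert hX] using glued

theorem homDensity_pow_le [Fintype ι] (h : IsJDecomp H J bag T)
    (hint : ∀ X Y, T.Adj X Y → #(bag X ∩ bag Y) = 1) (G : SimpleGraph V) :
    homDensity J G ^ Fintype.card ι ≤ homDensity H G := by
  classical
  obtain ⟨π, e, hπe⟩ := h.exists_fold_embedding
  have bound := h.geomMeanBound hint (fun X => (hπe X).1) (fun X => (hπe X).2) (homFinset J G)
    (fun _ _ => 1) fun _ _ => zero_le_one
  simpa only [prod_const_one, geomMean_one, mul_one, prod_boole, mem_univ, true_imp_iff,
    ← h.mem_homFinset_iff fun X => (hπe X).2, ← homDensity_eq_dens, ← homDensity_eq_expect]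
    using bound

end IsJDecomp

end Counting

section EdgeCount

variable {α ι γ : Type*} [DecidableEq α] {H : SimpleGraph α} {J : SimpleGraph γ}
  {bag : ι → Finset α} {T : SimpleGraph ι}

theorem IsTreeDecomp.card_inter_le_one (h : IsTreeDecomp H bag T)
    (hint : ∀ X Y, T.Adj X Y → #(bag X ∩ bag Y) = 1) {X Y : ι} (hXY : X ≠ Y) :
    #(bag X ∩ bag Y) ≤ 1 := by
  obtain ⟨p, hp⟩ := h.1.connected.exists_isPath X Y
  cases p with
  | nil => exact absurd rfl hXY
  | cons hadj q =>
    rw [← hint _ _ hadj]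
    exact card_le_card (subset_inter inter_subset_left
      (h.2.2.2 _ _ _ _ hp (List.mem_cons_of_mem _ q.start_mem_support)))

theorem IsJDecomp.card_mul_edgeCount_le [Finite α] [Fintype ι] (h : IsJDecomp H J bag T)
    (hint : ∀ X Y, T.Adj X Y → #(bag X ∩ bag Y) = 1) :
    Fintype.card ι * edgeCount J ≤ edgeCount H := by
  obtain ⟨_, e, hπe⟩ := h.exists_fold_embedding
  have hmem {X : ι} {s : Sym2 γ} : ∀ v ∈ s.map (e X), v ∈ bag X := by
    intro v hv
    obtain ⟨i, -, rfl⟩ := Sym2.mem_map.1 hv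
    exact mem_coe.1 ((hπe X).2 ▸ Set.mem_range_self i)
  have hinj : Function.Injective fun p : ι × J.edgeSet => (e p.1).mapEdgeSet p.2 := by
    rintro ⟨X, s⟩ ⟨Y, t⟩ hst
    obtain rfl | hXY := eq_or_ne X Y
    · exact congrArg (Prod.mk X) ((e X).mapEdgeSet.injective hst)
    obtain ⟨s, hs⟩ := s
    replace hst : s.map (e X) = t.1.map (e Y) := congrArg Subtype.val hst
    induction s with | _ i j
    have hboth : ∀ v ∈ s(i, j).map (e X), v ∈ bag X ∩ bag Y := fun v hv =>
      mem_inter.2 ⟨hmem v hv, hmem v (hst ▸ hv)⟩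
    refine absurd ?_ (J.ne_of_adj hs)
    exact (e X).injective (card_le_one.1 (h.1.card_inter_le_one hint hXY)
      _ (hboth _ (Sym2.mem_mk_left _ _)) _ (hboth _ (Sym2.mem_mk_right _ _)))
  simpa only [edgeCount, Nat.card_prod, Nat.card_eq_fintype_card (α := ι)] using
    Nat.card_le_card_of_injective _ hinj

end EdgeCount

section Goodman

variable {V : Type*} [Fintype V]

theorem expect_fin_three (F : (Fin 3 → V) → ℝ) :
    𝔼 ψ, F ψ = 𝔼 x, 𝔼 y, 𝔼 z, F ![x, y, z] := by
  let triple : (Fin 3 → V) ≃ V × V × V :=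
    { toFun ψ := (ψ 0, ψ 1, ψ 2)
      invFun p := ![p.1, p.2.1, p.2.2]
      left_inv ψ := by ext i; fin_cases i <;> rfl
      right_inv _ := rfl }
  rw [Fintype.expect_equiv triple F (fun p => F (triple.symm p)) fun ψ => by
    rw [triple.symm_apply_apply], ← univ_product_univ, expect_product]
  refine expect_congr rfl fun x _ => ?_
  rw [← univ_product_univ, expect_product]
  rfl

theorem homDensity_triangle (G : SimpleGraph V) [DecidableRel G.Adj] :
    homDensity (⊤ : SimpleGraph (Fin 3)) G =
      𝔼 x, 𝔼 y, 𝔼 z, G.adjMatrix ℝ x y * G.adjMatrix ℝ x z * G.adjMatrix ℝ y z := by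
  classical
  rw [homDensity_eq_expect, expect_fin_three]
  refine expect_congr rfl fun x _ => expect_congr rfl fun y _ => expect_congr rfl fun z _ => ?_
  have triangle : ![x, y, z] ∈ homFinset (⊤ : SimpleGraph (Fin 3)) G ↔
      (G.Adj x y ∧ G.Adj x z) ∧ G.Adj y z := by
    rw [mem_homFinset]
    refine ⟨fun h => ⟨⟨h 0 1 (by decide), h 0 2 (by decide)⟩, h 1 2 (by decide)⟩, ?_⟩
    rintro ⟨⟨hxy, hxz⟩, hyz⟩ i j hij
    fin_cases i <;> fin_cases j <;> first
      | exact absurd rfl hij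
      | assumption
      | exact SimpleGraph.Adj.symm ‹_›
  simp only [triangle, SimpleGraph.adjMatrix_apply, ite_and, ite_mul, one_mul, zero_mul]

variable [Nonempty V]

/-- In terms of `s = 2 * W - 1`, the integrand is `(1 + s x y * s x z + s x y * s y z +
s x z * s y z) / 4`, and each product averages to a mean of squares. -/
theorem goodman_of_symm {W : V → V → ℝ} (hW : ∀ x y, W x y = W y x) :
    1 / 4 ≤ 𝔼 x, 𝔼 y, 𝔼 z,
      (W x y * W x z * W y z + (1 - W x y) * (1 - W x z) * (1 - W y z)) := by
  set s : V → V → ℝ := fun x y => 2 * W x y - 1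
  have hs (x y) : s x y = s y x := by simp only [s, hW x y]
  have cherry : 0 ≤ 𝔼 x, 𝔼 y, 𝔼 z, s x y * s x z := expect_nonneg fun x _ => by
    simp only [← mul_expect, ← expect_mul]
    exact mul_self_nonneg _
  have cherry_mid : 𝔼 x, 𝔼 y, 𝔼 z, s x y * s y z = 𝔼 x, 𝔼 y, 𝔼 z, s x y * s x z := by
    rw [expect_comm]
    exact expect_congr rfl fun y _ => expect_congr rfl fun x _ => expect_congr rfl fun z _ => by
      rw [hs x y]
  have cherry_last : 𝔼 x, 𝔼 y, 𝔼 z, s x z * s y z = 𝔼 x, 𝔼 y, 𝔼 z, s x y * s x z := by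
    rw [expect_congr rfl fun x _ => expect_comm .., expect_comm]
    exact expect_congr rfl fun z _ => expect_congr rfl fun x _ => expect_congr rfl fun y _ => by
      rw [hs x z, hs y z]
  calc (1 / 4 : ℝ)
      ≤ 1 / 4 + 1 / 4 * (𝔼 x, 𝔼 y, 𝔼 z, s x y * s x z + 𝔼 x, 𝔼 y, 𝔼 z, s x y * s y z +
          𝔼 x, 𝔼 y, 𝔼 z, s x z * s y z) := by
        rw [cherry_mid, cherry_last]
        linarith
    _ = 𝔼 x, 𝔼 y, 𝔼 z, (1 / 4 + 1 / 4 * (s x y * s x z + s x y * s y z + s x z * s y z)) := by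
        simp only [expect_add_distrib, ← mul_expect, Fintype.expect_const]
    _ = _ := by
        simp only [s]
        ring_nf

theorem goodman (R : SimpleGraph V) :
    1 / 4 - 3 / Fintype.card V ≤
      homDensity (⊤ : SimpleGraph (Fin 3)) R + homDensity (⊤ : SimpleGraph (Fin 3)) Rᶜ := by
  classical
  set r := R.adjMatrix ℝ with hr
  set b := Rᶜ.adjMatrix ℝ with hb
  set δ : V → V → ℝ := fun x y => if x = y then 1 else 0 with hδ
  have r_symm (x y) : r x y = r y x := by simp only [hr, SimpleGraph.adjMatrix_apply, R.adj_comm]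
  have expect_δ (x) : 𝔼 y, δ x y = 1 / Fintype.card V := by
    simp [hδ, NNRat.smul_def]
  have blue (x y z) : (1 - r x y) * (1 - r x z) * (1 - r y z) ≤
      b x y * b x z * b y z + (δ x y + δ x z + δ y z) := by
    simp only [hr, hb, hδ, SimpleGraph.adjMatrix_apply, SimpleGraph.compl_adj]
    split_ifs <;> norm_num <;> tauto
  have total := (goodman_of_symm r_symm).trans <| expect_le_expect fun x _ =>
    expect_le_expect fun y _ => expect_le_expect fun z _ => add_le_add_right (blue x y z) _
  simp only [expect_add_distrib, Fintype.expect_const, expect_δ, ← homDensity_triangle, r, b]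
    at total
  linear_combination total

end Goodman

section Common

/-- `H` is common: asymptotically, no `2`-edge-colouring of a complete graph has a smaller total
density of red and blue copies of `H` than a uniformly random colouring has on average. The red
graph `R` encodes the colouring, the blue graph being `Rᶜ`. -/
def IsCommon {α : Type*} [Fintype α] (H : SimpleGraph α) : Prop :=
  ∀ ε > 0, ∀ᶠ n in atTop, ∀ R : SimpleGraph (Fin n),
    (2 : ℝ) ^ (1 - (edgeCount H : ℤ)) - ε ≤ homDensity H R + homDensity H Rᶜ

theorem IsCommon.exists_forall_le_card {α : Type*} [Fintype α] {H : SimpleGraph α}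
    (h : IsCommon H) {ε : ℝ} (hε : 0 < ε) :
    ∃ n₀ : ℕ, ∀ n ≥ n₀, ∀ R : SimpleGraph (Fin n),
      ((Nat.card (H →g R) + Nat.card (H →g Rᶜ) : ℕ) : ℝ) ≥
        ((2 : ℝ) ^ (1 - (edgeCount H : ℤ)) - ε) * (n : ℝ) ^ Fintype.card α := by
  obtain ⟨n₀, hn₀⟩ := eventually_atTop.1 ((h ε hε).and (eventually_gt_atTop 0))
  refine ⟨n₀, fun n hn R => ?_⟩
  obtain ⟨hR, hn⟩ := hn₀ n hn
  have hpos : (0 : ℝ) < (n : ℝ) ^ Fintype.card α := by positivity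
  specialize hR R
  rwa [homDensity, homDensity, ← add_div, Fintype.card_fin, le_div_iff₀ hpos, ← Nat.cast_add] at hR

theorem isCommon_triangle : IsCommon (⊤ : SimpleGraph (Fin 3)) := by
  have hedge : edgeCount (⊤ : SimpleGraph (Fin 3)) = 3 := by
    rw [edgeCount, Nat.card_eq_fintype_card, ← SimpleGraph.edgeFinset_card,
      SimpleGraph.card_edgeFinset_top_eq_card_choose_two, Fintype.card_fin]
    rfl
  intro ε hε
  have hsmall : ∀ᶠ n : ℕ in atTop, (3 : ℝ) / n < ε :=
    (tendsto_const_div_atTop_nhds_zero_nat 3).eventually_lt_const hε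
  filter_upwards [hsmall, eventually_gt_atTop 0] with n hn hpos R
  have : NeZero n := ⟨hpos.ne'⟩
  have bound := goodman R
  rw [Fintype.card_fin] at bound
  rw [hedge]
  norm_num
  linarith

theorem two_mul_half_pow_le {a b : ℝ} (ha : 0 ≤ a) (hb : 0 ≤ b) (m : ℕ) :
    2 * ((a + b) / 2) ^ m ≤ a ^ m + b ^ m := by
  have convex := (convexOn_pow m).2 (Set.mem_Ici.2 ha) (Set.mem_Ici.2 hb)
    (one_half_pos (α := ℝ)).le (one_half_pos (α := ℝ)).le (add_halves 1)
  simp only [smul_eq_mul] at convex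
  rw [show (a + b) / 2 = 1 / 2 * a + 1 / 2 * b by ring]
  linarith

theorem two_mul_two_zpow_half_pow (k m : ℕ) :
    2 * ((2 : ℝ) ^ (1 - (k : ℤ)) / 2) ^ m = 2 ^ (1 - (m * k : ℤ)) := by
  rw [← Nat.cast_mul, zpow_one_sub_natCast₀ two_ne_zero, zpow_one_sub_natCast₀ two_ne_zero,
    mul_comm m, pow_mul]
  field_simp
  rw [← mul_pow, one_div_mul_cancel (by positivity), one_pow]

theorem stmt18_general {α ι γ : Type*} [Fintype α] [DecidableEq α] [Finite ι] [Fintype γ]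
    {H : SimpleGraph α} {J : SimpleGraph γ} {bag : ι → Finset α} {T : SimpleGraph ι}
    (hJ : IsCommon J) (hdec : IsJDecomp H J bag T)
    (hint : ∀ X Y, T.Adj X Y → #(bag X ∩ bag Y) = 1) : IsCommon H := by
  have := Fintype.ofFinite ι
  intro ε hε
  set m := Fintype.card ι
  set c : ℝ := 2 ^ (1 - (edgeCount J : ℤ))
  let f : ℝ → ℝ := fun x => 2 * (x / 2) ^ m
  have hfc : (2 : ℝ) ^ (1 - (edgeCount H : ℤ)) ≤ f c := by
    rw [show f c = 2 ^ (1 - (m * edgeCount J : ℤ)) from two_mul_two_zpow_half_pow _ m]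
    gcongr
    · norm_num
    · exact_mod_cast hdec.card_mul_edgeCount_le hint
  obtain ⟨x, hfx, hx, hxc⟩ : ∃ x, f c - ε < f x ∧ 0 < x ∧ x < c := by
    have hf : Continuous f := by fun_prop
    have near : ∀ᶠ x in 𝓝[<] c, f c - ε < f x :=
      (hf.tendsto c).mono_left nhdsWithin_le_nhds |>.eventually_const_lt (sub_lt_self _ hε)
    exact (near.and (Ioo_mem_nhdsLT (by positivity))).exists
  filter_upwards [hJ (c - x) (sub_pos.2 hxc), eventually_gt_atTop 0] with n hn hpos R
  have : NeZero n := ⟨hpos.ne'⟩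
  calc (2 : ℝ) ^ (1 - (edgeCount H : ℤ)) - ε
      ≤ f x := by linarith
    _ ≤ 2 * ((homDensity J R + homDensity J Rᶜ) / 2) ^ m := by
        have := hn R
        simp only [f]
        gcongr
        linarith
    _ ≤ homDensity J R ^ m + homDensity J Rᶜ ^ m :=
        two_mul_half_pow_le (homDensity_nonneg_s18 J R) (homDensity_nonneg_s18 J Rᶜ) m
    _ ≤ homDensity H R + homDensity H Rᶜ :=
        add_le_add (hdec.homDensity_pow_le hint R) (hdec.homDensity_pow_le hint Rᶜ)

end Common

end

theorem stmt18 {α : Type*} [Fintype α] [DecidableEq α] (H : SimpleGraph α)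
    (ι : Type) [Fintype ι] (bag : ι → Finset α) (T : SimpleGraph ι)
    (hdec : IsJDecomp H (⊤ : SimpleGraph (Fin 3)) bag T)
    (hint : ∀ X Y : ι, T.Adj X Y → (bag X ∩ bag Y).card = 1)
    (ε : ℝ) (hε : 0 < ε) :
    ∃ n₀ : ℕ, ∀ n : ℕ, n₀ ≤ n →
      -- a red/blue colouring of the edges of Kₙ is given by the graph R of red edges;
      -- the blue edges form its complement Rᶜ
      ∀ R : SimpleGraph (Fin n),
        ((Nat.card (H →g R) + Nat.card (H →g Rᶜ) : ℕ) : ℝ) ≥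
          ((2 : ℝ) ^ (1 - (edgeCount H : ℤ)) - ε) * (n : ℝ) ^ (Fintype.card α) :=
  (stmt18_general isCommon_triangle hdec hint).exists_forall_le_card hε
end
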